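/- arXiv:1611.06414 — 3 statements merged into one kernel-verified Lean document; each statement's English description precedes it below -/
import Mathlib

section
/- For any finite set A of integers with |A| ≥ 16k^4, one has S_k ≤ M_k ≤ 2·S_k, where M_k is the total number of solutions to x_1+...+x_k = y_1+...+y_k in A^{2k} and S_k is the number of such solutions with the x_i pairwise distinct and the y_i pairwise distinct. -/
open Finset

open scoped Classical in
/-- `M_k(A)`: number of solutions of `x₁+⋯+x_k = y₁+⋯+y_k` in `A^{2k}`. -/
noncomputable def Mcount (k : ℕ) (A : Finset ℤ) : ℕ :=
  (((Fintype.piFinset fun _ : Fin k => A) ×ˢ (Fintype.piFinset fun _ : Fin k => A)).filter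
    (fun p => (∑ i, p.1 i) = ∑ i, p.2 i)).card

open scoped Classical in
/-- `S_k(A)`: solutions with the `x_i` pairwise distinct and the `y_i` pairwise distinct. -/
noncomputable def Scount (k : ℕ) (A : Finset ℤ) : ℕ :=
  (((Fintype.piFinset fun _ : Fin k => A) ×ˢ (Fintype.piFinset fun _ : Fin k => A)).filter
    (fun p => (∑ i, p.1 i) = (∑ i, p.2 i) ∧ Function.Injective p.1 ∧ Function.Injective p.2)).card

open scoped Classical in
/-- `S_k^*(A₁, A₂)`: solutions with `x ∈ A₁^k`, `y ∈ A₂^k` and all `2k` entries pairwise distinct. -/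
noncomputable def Sstar2 (k : ℕ) (A₁ A₂ : Finset ℤ) : ℕ :=
  (((Fintype.piFinset fun _ : Fin k => A₁) ×ˢ (Fintype.piFinset fun _ : Fin k => A₂)).filter
    (fun p => (∑ i, p.1 i) = (∑ i, p.2 i) ∧ Function.Injective p.1 ∧ Function.Injective p.2 ∧
      ∀ i j, p.1 i ≠ p.2 j)).card

/-- `S_k^*(A)`. -/
noncomputable def Sstar (k : ℕ) (A : Finset ℤ) : ℕ := Sstar2 k A A

/-- `A` is a weak `B_k`-set (`B_k^*`-set): there is no solution of
`x₁+⋯+x_k = y₁+⋯+y_k` with all `2k` elements of `A` pairwise distinct. -/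
def IsWeakBkSet (k : ℕ) (A : Finset ℤ) : Prop :=
  ∀ x y : Fin k → ℤ, (∀ i, x i ∈ A) → (∀ i, y i ∈ A) →
    (∑ i, x i) = (∑ i, y i) → Function.Injective x → Function.Injective y →
      ∃ i j, x i = y j

/-!
Work in the semiring `ℕ[G]` of finitely supported `ℕ`-valued functions under convolution, and write
`‖f‖² = ∑ₙ f(n)²`. With `a = 1_A` one has `σ_k = a ^ k`, so `M_k = ‖a ^ k‖²`.

Let `d = σ_k - s_k` count the tuples with a repeated entry. Tuples with `x i = x j` for a fixed pair
`i ≠ j` are counted by `b * a ^ (k - 2)`, where `b` is the indicator of `2 • A`, so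
`d ≤ k² • (b * a ^ (k - 2))` pointwise. As `‖f‖²` is the value at `0` of `f` convolved with its
reflection, Cauchy–Schwarz makes `j ↦ ‖a ^ (m - j) * b ^ j‖²` log-convex; since `‖b ^ m‖ = ‖a ^ m‖`
when doubling is injective, this gives `‖b * a ^ (k - 2)‖² ≤ M_{k-1}` and hence Ruzsa's inequality
`‖d‖² ≤ k⁴ M_{k-1}`.

Translates of a nonnegative function have nonnegative inner products, so `|A| M_{k-1} ≤ M_k`. Thus
`‖d‖² ≤ M_k / 16`, and `‖s_k + d‖² ≤ (3/2) ‖s_k‖² + 3 ‖d‖²` finishes the argument.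
-/

open AddMonoidAlgebra
open Function (Injective)

lemma le_max_endpoints_of_sq_le_mul {R : Type*} [CommSemiring R] [LinearOrder R]
    [IsStrictOrderedRing R] {u : ℕ → R} (hu₀ : ∀ j, 0 ≤ u j) {m : ℕ}
    (hu : ∀ j, j + 2 ≤ m → u (j + 1) ^ 2 ≤ u j * u (j + 2)) {j : ℕ} (hj : j ≤ m) :
    u j ≤ max (u 0) (u m) := by
  induction m generalizing j with
  | zero => simp [Nat.le_zero.mp hj]
  | succ m ih =>
    have ih' : ∀ i ≤ m, u i ≤ max (u 0) (u m) := fun i hi ↦ ih (fun l hl ↦ hu l (by lia)) hi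
    have last : u m ≤ max (u 0) (u (m + 1)) := by
      by_contra! hlt
      obtain ⟨h0, h1⟩ := max_lt_iff.mp hlt
      obtain _ | l := m
      · exact h0.false
      have hl : u l ≤ u (l + 1) := (ih' l (by lia)).trans (max_le h0.le le_rfl)
      have : u (l + 1) ^ 2 < u (l + 1) ^ 2 := calc
        u (l + 1) ^ 2 ≤ u l * u (l + 2) := hu l le_rfl
        _ ≤ u (l + 1) * u (l + 2) := mul_le_mul_of_nonneg_right hl (hu₀ _)
        _ < u (l + 1) * u (l + 1) := mul_lt_mul_of_pos_left h1 ((hu₀ 0).trans_lt h0)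
        _ = u (l + 1) ^ 2 := (sq _).symm
      exact this.false
    obtain hj | rfl := Nat.le_succ_iff.mp hj
    · exact (ih' j hj).trans (max_le (le_max_left _ _) last)
    · exact le_max_right _ _

section SqSum

variable {R G : Type*} [CommSemiring R]

/-- The squared `ℓ²` norm `∑ₙ f(n)²` of a finitely supported function. -/
noncomputable def sqSum (f : R[G]) : R := f.coeff.sum fun _ r ↦ r ^ 2

lemma sqSum_eq_sum_of_support_subset (f : R[G]) {s : Finset G} (hs : f.coeff.support ⊆ s) :
    sqSum f = ∑ n ∈ s, f.coeff n ^ 2 :=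
  Finsupp.sum_of_support_subset _ hs _ (by simp)

lemma sqSum_mapDomain {H : Type*} {φ : G → H} (hφ : Injective φ) (f : R[G]) :
    sqSum (mapDomain φ f) = sqSum f :=
  Finsupp.sum_mapDomain_index_inj hφ

lemma sqSum_nsmul (c : ℕ) (f : R[G]) : sqSum (c • f) = c ^ 2 * sqSum f := by
  have hs : (c • f).coeff.support ⊆ f.coeff.support := Finsupp.support_smul
  rw [sqSum_eq_sum_of_support_subset _ hs, sqSum, Finsupp.sum, mul_sum]
  simp [mul_pow]

section LinearOrder

variable [LinearOrder R] [IsStrictOrderedRing R] [ExistsAddOfLE R]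

lemma sqSum_nonneg (f : R[G]) : 0 ≤ sqSum f := sum_nonneg fun _ _ ↦ sq_nonneg _

lemma two_mul_sqSum_add_le (f g : R[G]) : 2 * sqSum (f + g) ≤ 3 * sqSum f + 6 * sqSum g := by
  classical
  rw [sqSum_eq_sum_of_support_subset (f + g) (s := f.coeff.support ∪ g.coeff.support)
      Finsupp.support_add,
    sqSum_eq_sum_of_support_subset f subset_union_left,
    sqSum_eq_sum_of_support_subset g subset_union_right, mul_sum, mul_sum, mul_sum,
    ← sum_add_distrib]
  gcongr with n
  rw [coeff_add, Finsupp.add_apply]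
  generalize f.coeff n = x, g.coeff n = y
  calc
    2 * (x + y) ^ 2 = 2 * x ^ 2 + 2 * y ^ 2 + 2 * x * (2 * y) := by ring
    _ ≤ 2 * x ^ 2 + 2 * y ^ 2 + (x ^ 2 + (2 * y) ^ 2) := by gcongr; exact two_mul_le_add_sq _ _
    _ = 3 * x ^ 2 + 6 * y ^ 2 := by ring

end LinearOrder

section CanonicallyOrdered

variable [PartialOrder R] [IsOrderedRing R] [CanonicallyOrderedAdd R]

lemma sqSum_mono {f g : R[G]} (h : f.coeff ≤ g.coeff) : sqSum f ≤ sqSum g := by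
  rw [sqSum_eq_sum_of_support_subset f (Finsupp.support_mono h), sqSum, Finsupp.sum]
  gcongr with n
  exact h n

lemma sqSum_add_sqSum_le (f g : R[G]) : sqSum f + sqSum g ≤ sqSum (f + g) := by
  classical
  rw [sqSum_eq_sum_of_support_subset (f + g) (s := f.coeff.support ∪ g.coeff.support)
      Finsupp.support_add,
    sqSum_eq_sum_of_support_subset f subset_union_left,
    sqSum_eq_sum_of_support_subset g subset_union_right, ← sum_add_distrib]
  gcongr with n
  exact pow_add_pow_le zero_le zero_le two_ne_zero

lemma sum_sqSum_le {ι : Type*} (s : Finset ι) (f : ι → R[G]) :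
    ∑ i ∈ s, sqSum (f i) ≤ sqSum (∑ i ∈ s, f i) := by
  classical
  induction s using Finset.induction_on with
  | empty => simp
  | insert i s hi ih =>
    rw [sum_insert hi, sum_insert hi]
    exact (add_le_add_right ih _).trans (sqSum_add_sqSum_le _ _)

end CanonicallyOrdered

variable [AddCommGroup G]

variable (R G) in
/-- The reflection `f ↦ f(-·)`, as an endomorphism of the convolution semiring. -/
noncomputable def reflect : R[G] →+* R[G] := mapDomainRingHom R negAddMonoidHom

@[simp]
lemma reflect_single (n : G) (r : R) : reflect R G (single n r) = single (-n) r := by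
  simp [reflect]

@[simp]
lemma reflect_reflect (f : R[G]) : reflect R G (reflect R G f) = f := by
  induction f using AddMonoidAlgebra.induction_linear with
  | zero => simp
  | add f g hf hg => simp [hf, hg]
  | single n r => simp

@[simp]
lemma coeff_reflect (f : R[G]) (n : G) : (reflect R G f).coeff n = f.coeff (-n) := by
  classical
  induction f using AddMonoidAlgebra.induction_linear with
  | zero => simp
  | add f g hf hg => simp [hf, hg]
  | single m r => simp [Finsupp.single_apply, neg_eq_iff_eq_neg]

lemma coeff_mul_reflect_zero (f g : R[G]) :
    (f * reflect R G g).coeff 0 = f.coeff.sum fun n r ↦ r * g.coeff n := by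
  simp [coeff_mul_apply_left]

lemma sqSum_eq_coeff_mul_reflect (f : R[G]) : sqSum f = (f * reflect R G f).coeff 0 := by
  simp only [sqSum, coeff_mul_reflect_zero, sq]
  rfl

lemma sqSum_single_mul (n : G) (r : R) (f : R[G]) : sqSum (single n r * f) = r ^ 2 * sqSum f := by
  have cancel : single n r * f * reflect R G (single n r * f) =
      single 0 (r ^ 2) * (f * reflect R G f) := by
    rw [map_mul, mul_mul_mul_comm, reflect_single, single_mul_single, add_neg_cancel, sq]
  rw [sqSum_eq_coeff_mul_reflect, cancel, sqSum_eq_coeff_mul_reflect]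
  simp

section LinearOrder

variable [LinearOrder R] [IsStrictOrderedRing R] [ExistsAddOfLE R]

lemma coeff_mul_reflect_zero_sq_le (f g : R[G]) :
    (f * reflect R G g).coeff 0 ^ 2 ≤ sqSum f * sqSum g := by
  classical
  let s := f.coeff.support ∪ g.coeff.support
  rw [coeff_mul_reflect_zero,
    Finsupp.sum_of_support_subset (s := s) _ subset_union_left _ (by simp),
    sqSum_eq_sum_of_support_subset f (s := s) subset_union_left,
    sqSum_eq_sum_of_support_subset g (s := s) subset_union_right]
  exact sum_mul_sq_le_sq_mul_sq _ _ _

-- `‖f g h‖² = ⟨f f* h, g g* h⟩` with `f* = reflect f`, and `‖f f* h‖ = ‖f² h‖`.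
lemma sqSum_mul_mul_sq_le (f g h : R[G]) :
    sqSum (f * g * h) ^ 2 ≤ sqSum (f ^ 2 * h) * sqSum (g ^ 2 * h) := by
  have norm_mul_reflect (f : R[G]) : sqSum (f * reflect R G f * h) = sqSum (f ^ 2 * h) := by
    simp only [sqSum_eq_coeff_mul_reflect, map_mul, map_pow, reflect_reflect]
    ring_nf
  have regroup : f * g * h * reflect R G (f * g * h) =
      f * reflect R G f * h * reflect R G (g * reflect R G g * h) := by
    simp only [map_mul, reflect_reflect]
    ring
  rw [sqSum_eq_coeff_mul_reflect (f * g * h), regroup, ← norm_mul_reflect f, ← norm_mul_reflect g]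
  exact coeff_mul_reflect_zero_sq_le _ _

lemma sqSum_pow_mul_pow_le (f g : R[G]) (i j : ℕ) :
    sqSum (f ^ i * g ^ j) ≤ max (sqSum (f ^ (i + j))) (sqSum (g ^ (i + j))) := by
  have log_convex (l : ℕ) (hl : l + 2 ≤ i + j) :
      sqSum (f ^ (i + j - (l + 1)) * g ^ (l + 1)) ^ 2 ≤
        sqSum (f ^ (i + j - l) * g ^ l) * sqSum (f ^ (i + j - (l + 2)) * g ^ (l + 2)) := by
    obtain ⟨t, ht⟩ := Nat.exists_eq_add_of_le' hl
    rw [show i + j - (l + 1) = t + 1 by lia, show i + j - l = t + 2 by lia,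
      show i + j - (l + 2) = t by lia]
    convert sqSum_mul_mul_sq_le f g (f ^ t * g ^ l) using 3 <;> ring
  simpa using le_max_endpoints_of_sq_le_mul (u := fun l ↦ sqSum (f ^ (i + j - l) * g ^ l))
    (fun _ ↦ sqSum_nonneg _) log_convex (Nat.le_add_left j i)

end LinearOrder

end SqSum

section FiberCount

variable {G X : Type*}

/-- The function `n ↦ #{x ∈ S | φ x = n}`. Representation functions of additive number theory
arise when `S` consists of tuples and `φ` is their sum. -/
noncomputable def fiberCount (S : Finset X) (φ : X → G) : ℕ[G] := ∑ x ∈ S, single (φ x) 1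

lemma coeff_fiberCount [DecidableEq G] (S : Finset X) (φ : X → G) (n : G) :
    (fiberCount S φ).coeff n = #{x ∈ S | φ x = n} := by
  simp [fiberCount, Finsupp.finsetSum_apply, Finsupp.single_apply]

lemma fiberCount_filter_add_filter_not (S : Finset X) (φ : X → G) (p : X → Prop)
    [DecidablePred p] :
    fiberCount {x ∈ S | p x} φ + fiberCount {x ∈ S | ¬p x} φ = fiberCount S φ :=
  sum_filter_add_sum_filter_not ..

lemma sqSum_fiberCount [AddCommGroup G] [DecidableEq G] (S : Finset X) (φ : X → G) :
    sqSum (fiberCount S φ) = #{p ∈ S ×ˢ S | φ p.1 = φ p.2} := by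
  rw [card_filter, sum_product]
  simp [-sum_boole, sqSum_eq_coeff_mul_reflect, fiberCount, sum_mul_sum, Finsupp.finsetSum_apply,
    Finsupp.single_apply, single_mul_single, ← sub_eq_add_neg, sub_eq_zero]

lemma card_mul_sqSum_le [AddCommGroup G] (S : Finset X) (φ : X → G) (f : ℕ[G]) :
    #S * sqSum f ≤ sqSum (fiberCount S φ * f) := by
  calc
    #S * sqSum f = ∑ x ∈ S, sqSum (single (φ x) 1 * f) := by simp [sqSum_single_mul]
    _ ≤ sqSum (fiberCount S φ * f) := by rw [fiberCount, sum_mul]; exact sum_sqSum_le ..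

lemma fiberCount_piFinset {ι : Type*} [Fintype ι] [DecidableEq ι] [AddCommMonoid G]
    {X : ι → Type*} (S : ∀ i, Finset (X i)) (φ : ∀ i, X i → G) :
    fiberCount (Fintype.piFinset S) (fun x ↦ ∑ i, φ i (x i)) = ∏ i, fiberCount (S i) (φ i) := by
  simp [fiberCount, prod_univ_sum]

lemma sqSum_fiberCount_two_nsmul_mul_pow_le [AddCommGroup G] (h2 : Injective fun a : G ↦ 2 • a)
    (A : Finset G) (m : ℕ) :
    sqSum (fiberCount A (2 • ·) * fiberCount A id ^ m) ≤ sqSum (fiberCount A id ^ (m + 1)) := by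
  have dilate :
      fiberCount A (2 • ·) = mapDomainRingHom ℕ (nsmulAddMonoidHom 2) (fiberCount A id) := by
    simp [fiberCount]
  have norm_dilate :
      sqSum (fiberCount A (2 • ·) ^ (m + 1)) = sqSum (fiberCount A id ^ (m + 1)) := by
    rw [dilate, ← map_pow]
    exact sqSum_mapDomain h2 _
  have interpolate := sqSum_pow_mul_pow_le (fiberCount A id) (fiberCount A (2 • ·)) m 1
  rwa [norm_dilate, max_self, pow_one, mul_comm] at interpolate

end FiberCount

section SumRep

lemma filter_piFinset_apply_eq_const {ι X : Type*} [Fintype ι] [DecidableEq ι] [DecidableEq X]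
    (i j : ι) {A : Finset X} {a : X} (ha : a ∈ A) :
    {x ∈ {x ∈ Fintype.piFinset fun _ : ι ↦ A | x i = x j} | x i = a} =
      Fintype.piFinset fun l ↦ if l ∈ ({i, j} : Finset ι) then {a} else A := by
  ext x
  simp only [mem_filter, Fintype.mem_piFinset]
  refine ⟨fun h l ↦ by grind [h.1.1 l], fun hx ↦ ⟨⟨fun l ↦ ?_, ?_⟩, ?_⟩⟩
  · grind [hx l]
  · grind [hx i, hx j]
  · grind [hx i]

variable (ι : Type*) {G : Type*} [Fintype ι] [DecidableEq ι] [AddCommGroup G]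

/-- `σ_k`, for `k = card ι`: the number of representations of `n` as `∑ i, x i` with `x ∈ A ^ ι`. -/
noncomputable def sumRep (A : Finset G) : ℕ[G] :=
  fiberCount (Fintype.piFinset fun _ : ι ↦ A) fun x ↦ ∑ i, x i

lemma sumRep_eq_pow (A : Finset G) : sumRep ι A = fiberCount A id ^ Fintype.card ι := by
  simpa [sumRep] using fiberCount_piFinset (fun _ : ι ↦ A) fun _ ↦ id

lemma card_mul_sqSum_pow_le_sqSum_sumRep [Nonempty ι] (A : Finset G) :
    #A * sqSum (fiberCount A id ^ (Fintype.card ι - 1)) ≤ sqSum (sumRep ι A) := by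
  rw [sumRep_eq_pow, ← mul_pow_sub_one Fintype.card_ne_zero]
  exact card_mul_sqSum_le ..

variable [DecidableEq G]

/-- `s_k`, for `k = card ι`: the representations with pairwise distinct summands. -/
noncomputable def distinctSumRep (A : Finset G) : ℕ[G] :=
  fiberCount {x ∈ Fintype.piFinset fun _ : ι ↦ A | Injective x} fun x ↦ ∑ i, x i

/-- `σ_k - s_k`, for `k = card ι`: the representations with a repeated summand. -/
noncomputable def repeatedSumRep (A : Finset G) : ℕ[G] :=
  fiberCount {x ∈ Fintype.piFinset fun _ : ι ↦ A | ¬Injective x} fun x ↦ ∑ i, x i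

lemma distinctSumRep_add_repeatedSumRep (A : Finset G) :
    distinctSumRep ι A + repeatedSumRep ι A = sumRep ι A :=
  fiberCount_filter_add_filter_not ..

variable {ι}

lemma fiberCount_filter_apply_eq_apply {i j : ι} (hij : i ≠ j) (A : Finset G) :
    fiberCount {x ∈ Fintype.piFinset fun _ : ι ↦ A | x i = x j} (fun x ↦ ∑ l, x l) =
      fiberCount A (2 • ·) * fiberCount A id ^ (Fintype.card ι - 2) := by
  have fiber_sum {a : G} (ha : a ∈ A) :
      fiberCount {x ∈ {x ∈ Fintype.piFinset fun _ : ι ↦ A | x i = x j} | x i = a}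
        (fun x ↦ ∑ l, x l) = single (2 • a) 1 * fiberCount A id ^ (Fintype.card ι - 2) := by
    rw [filter_piFinset_apply_eq_const i j ha]
    refine (fiberCount_piFinset _ fun _ ↦ id).trans ?_
    simp only [apply_ite (fiberCount · id)]
    rw [prod_ite, prod_const, prod_const, filter_mem_eq_inter, univ_inter, card_pair hij,
      filter_notMem_eq_sdiff, card_univ_sdiff, card_pair hij]
    simp [fiberCount, single_pow]
  calc
    _ = ∑ a ∈ A, fiberCount {x ∈ {x ∈ Fintype.piFinset fun _ : ι ↦ A | x i = x j} | x i = a}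
          (fun x ↦ ∑ l, x l) :=
      (sum_fiberwise_of_maps_to (fun x hx ↦ by simp_all) _).symm
    _ = _ := by rw [sum_congr rfl fun a ↦ fiber_sum, ← sum_mul]; rfl

variable (ι)

lemma repeatedSumRep_le (A : Finset G) :
    (repeatedSumRep ι A).coeff ≤ (Fintype.card ι ^ 2 •
      (fiberCount A (2 • ·) * fiberCount A id ^ (Fintype.card ι - 2))).coeff := by
  intro n
  have cover : {x ∈ {x ∈ Fintype.piFinset fun _ : ι ↦ A | ¬Injective x} | ∑ l, x l = n} ⊆
      (univ : Finset ι).offDiag.biUnion fun q ↦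
        {x ∈ {x ∈ Fintype.piFinset fun _ : ι ↦ A | x q.1 = x q.2} | ∑ l, x l = n} := by
    intro x hx
    simp only [mem_filter, Function.not_injective_iff] at hx
    obtain ⟨⟨hxA, i, j, hxij, hij⟩, hxn⟩ := hx
    simp only [mem_biUnion, mem_filter, mem_offDiag]
    exact ⟨(i, j), by simpa using hij, ⟨hxA, hxij⟩, hxn⟩
  calc
    (repeatedSumRep ι A).coeff n
      ≤ ∑ q ∈ (univ : Finset ι).offDiag,
          #{x ∈ {x ∈ Fintype.piFinset fun _ : ι ↦ A | x q.1 = x q.2} | ∑ l, x l = n} := by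
        rw [repeatedSumRep, coeff_fiberCount]
        exact (card_le_card cover).trans card_biUnion_le
    _ = #(univ : Finset ι).offDiag •
          (fiberCount A (2 • ·) * fiberCount A id ^ (Fintype.card ι - 2)).coeff n :=
        sum_eq_card_nsmul fun q hq ↦ by
          rw [← fiberCount_filter_apply_eq_apply (mem_offDiag.mp hq).2.2 A, coeff_fiberCount]
    _ ≤ _ := by
        rw [offDiag_card, card_univ, ← sq, coeff_smul_apply]
        gcongr
        exact Nat.sub_le _ _

lemma sqSum_repeatedSumRep_le (h2 : Injective fun a : G ↦ 2 • a) (A : Finset G) :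
    sqSum (repeatedSumRep ι A) ≤
      Fintype.card ι ^ 4 * sqSum (fiberCount A id ^ (Fintype.card ι - 1)) := by
  obtain hι | hι := le_or_gt (Fintype.card ι) 1
  · have := Fintype.card_le_one_iff_subsingleton.mp hι
    simp [repeatedSumRep, Function.injective_of_subsingleton, fiberCount, sqSum]
  · calc
      sqSum (repeatedSumRep ι A)
        ≤ (Fintype.card ι ^ 2) ^ 2 *
            sqSum (fiberCount A (2 • ·) * fiberCount A id ^ (Fintype.card ι - 2)) :=
          (sqSum_mono (repeatedSumRep_le ι A)).trans_eq (sqSum_nsmul ..)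
      _ ≤ Fintype.card ι ^ 4 * sqSum (fiberCount A id ^ (Fintype.card ι - 2 + 1)) := by
          rw [← pow_mul]
          gcongr
          exact sqSum_fiberCount_two_nsmul_mul_pow_le h2 A _
      _ = _ := by rw [show Fintype.card ι - 2 + 1 = Fintype.card ι - 1 by lia]

lemma mul_sqSum_repeatedSumRep_le (h2 : Injective fun a : G ↦ 2 • a) (A : Finset G) {c : ℕ}
    (hA : c * Fintype.card ι ^ 4 ≤ #A) :
    c * sqSum (repeatedSumRep ι A) ≤ sqSum (sumRep ι A) := by
  have ruzsa := sqSum_repeatedSumRep_le ι h2 A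
  cases isEmpty_or_nonempty ι
  · simp_all
  calc
    c * sqSum (repeatedSumRep ι A)
      ≤ c * Fintype.card ι ^ 4 * sqSum (fiberCount A id ^ (Fintype.card ι - 1)) := by
        rw [mul_assoc]; gcongr
    _ ≤ #A * sqSum (fiberCount A id ^ (Fintype.card ι - 1)) := by gcongr
    _ ≤ sqSum (sumRep ι A) := card_mul_sqSum_pow_le_sqSum_sumRep ι A

theorem Sk_Mk_comparison_general (h2 : Injective fun a : G ↦ 2 • a) (A : Finset G)
    (hA : 16 * Fintype.card ι ^ 4 ≤ #A) :
    sqSum (distinctSumRep ι A) ≤ sqSum (sumRep ι A) ∧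
      sqSum (sumRep ι A) ≤ 2 * sqSum (distinctSumRep ι A) := by
  have repeated := mul_sqSum_repeatedSumRep_le ι h2 A hA
  have superadditive := sqSum_add_sqSum_le (distinctSumRep ι A) (repeatedSumRep ι A)
  have weighted := two_mul_sqSum_add_le (distinctSumRep ι A) (repeatedSumRep ι A)
  rw [distinctSumRep_add_repeatedSumRep] at superadditive weighted
  lia

end SumRep

lemma sqSum_sumRep_eq_Mcount (k : ℕ) (A : Finset ℤ) : sqSum (sumRep (Fin k) A) = Mcount k A := by
  classical
  rw [sumRep, sqSum_fiberCount, Mcount]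

lemma sqSum_distinctSumRep_eq_Scount (k : ℕ) (A : Finset ℤ) :
    sqSum (distinctSumRep (Fin k) A) = Scount k A := by
  classical
  rw [distinctSumRep, sqSum_fiberCount, Scount]
  congr 1
  ext p
  simp only [mem_filter, mem_product]
  tauto

theorem Sk_Mk_comparison (k : ℕ) (hk : 1 ≤ k) (A : Finset ℤ) (hA : 16 * k ^ 4 ≤ A.card) :
    Scount k A ≤ Mcount k A ∧ Mcount k A ≤ 2 * Scount k A := by
  simpa only [sqSum_sumRep_eq_Mcount, sqSum_distinctSumRep_eq_Scount] using
    Sk_Mk_comparison_general (Fin k) (nsmul_right_injective two_ne_zero) A (by simpa using hA)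
end

section
/- Let 1 ≤ l < k and let A be a B_k*-set with |A| ≥ 16k^4. Then S_k ≤ (√2·k)^{2(k−l)} · |A|^{k−l} · S_l. -/
open Finset

open MeasureTheory AddCircle
open scoped ComplexConjugate

/-!
Write `M_j` for `Mcount j A`, which is the `2j`-th moment of the exponential sum
`f(θ) = ∑ a ∈ A, e(aθ)`. A solution in which `x_a = x_b` contributes to
`∫ f(2θ) f(θ)^(j-2) conj(f(θ))^j`. Since `θ ↦ 2θ` preserves the measure, `f(2θ)` has the same
moments as `f(θ)`, and Hölder's inequality together with `|A| M_(j-1) ≤ M_j` bounds this integral by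
`M_j / √|A|`. Summing over the pairs `(a, b)` gives `M_j ≤ 2 S_j` as soon as `|A| ≥ 16 j ^ 4`.

If `A` is a `B_k^*`-set, every solution counted by `S_k` has some `x_i = y_j`; cancelling this
coincidence gives `S_k ≤ k ^ 2 |A| S_(k-1)`, so `M_k ≤ R M_(k-1)` with `R = 2 k ^ 2 |A|`. The ratios
`M_(j+1) / M_j` increase with `j`, hence `M_(k-1) ≤ R ^ (k-1-l) M_l`.
-/

section Inequalities

theorem le_pow_mul_of_sq_le_mul {u : ℕ → ℝ} (hpos : ∀ n, 0 < u n)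
    (hlog : ∀ n, u (n + 1) ^ 2 ≤ u n * u (n + 2)) {R : ℝ} (l d : ℕ)
    (hR : u (l + d + 1) ≤ R * u (l + d)) : u (l + d) ≤ R ^ d * u l := by
  induction d with
  | zero => simp
  | succ d ih =>
    have hR₀ : 0 ≤ R := le_of_mul_le_mul_right (by simpa using (hpos _).le.trans hR) (hpos _)
    have hstep : u (l + d + 1) ≤ R * u (l + d) := by
      refine le_of_mul_le_mul_right ?_ (hpos (l + d + 1))
      calc u (l + d + 1) * u (l + d + 1) ≤ u (l + d) * u (l + d + 2) := by
            rw [← sq]; exact hlog (l + d)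
        _ ≤ u (l + d) * (R * u (l + d + 1)) := mul_le_mul_of_nonneg_left hR (hpos _).le
        _ = R * u (l + d) * u (l + d + 1) := by ring
    calc u (l + d + 1) ≤ R * u (l + d) := hstep
      _ ≤ R * (R ^ d * u l) := mul_le_mul_of_nonneg_left (ih hstep) hR₀
      _ = R ^ (d + 1) * u l := by ring

theorem succ_mul_pow_mul_le {x y : ℝ} (hx : 0 ≤ x) (hy : 0 ≤ y) (m : ℕ) :
    (m + 1) * (x ^ m * y) ≤ m * x ^ (m + 1) + y ^ (m + 1) := by
  induction m with
  | zero => simp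
  | succ m ih =>
    have hsq : 0 ≤ (m + 1) * (x ^ m * (x - y) ^ 2) := by positivity
    push_cast
    linear_combination y * ih + hsq

variable {α : Type*} {_ : MeasurableSpace α} {μ : Measure α} {f g : α → ℝ}

theorem sq_integral_pow_succ_le {n : ℕ} (hf : ∀ x, 0 ≤ f x)
    (hn : Integrable (fun x ↦ f x ^ n) μ) (hn₁ : Integrable (fun x ↦ f x ^ (n + 1)) μ)
    (hn₂ : Integrable (fun x ↦ f x ^ (n + 2)) μ) :
    (∫ x, f x ^ (n + 1) ∂μ) ^ 2 ≤ (∫ x, f x ^ n ∂μ) * ∫ x, f x ^ (n + 2) ∂μ := by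
  have hquad (t : ℝ) : 0 ≤ (∫ x, f x ^ n ∂μ) * (t * t) + (-2 * ∫ x, f x ^ (n + 1) ∂μ) * t
      + ∫ x, f x ^ (n + 2) ∂μ := by
    calc 0 ≤ ∫ x, f x ^ n * (f x - t) ^ 2 ∂μ :=
          integral_nonneg fun x ↦ mul_nonneg (pow_nonneg (hf x) n) (sq_nonneg _)
      _ = ∫ x, (t * t * f x ^ n + -2 * t * f x ^ (n + 1) + f x ^ (n + 2)) ∂μ := by
          congr with x; ring
      _ = _ := by
          rw [integral_add (by fun_prop) hn₂, integral_add (by fun_prop) (by fun_prop),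
            integral_const_mul, integral_const_mul]
          ring
  have hdisc := discrim_le_zero hquad
  rw [discrim] at hdisc
  linarith

theorem integral_pow_mul_le_of_integral_pow_eq {m : ℕ} (hf : ∀ x, 0 ≤ f x) (hg : ∀ x, 0 ≤ g x)
    (hfm : Integrable (fun x ↦ f x ^ (m + 1)) μ) (hgm : Integrable (fun x ↦ g x ^ (m + 1)) μ)
    (hfg : Integrable (fun x ↦ f x ^ m * g x) μ)
    (heq : ∫ x, g x ^ (m + 1) ∂μ = ∫ x, f x ^ (m + 1) ∂μ) :
    ∫ x, f x ^ m * g x ∂μ ≤ ∫ x, f x ^ (m + 1) ∂μ := by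
  have hint : (m + 1) * ∫ x, f x ^ m * g x ∂μ
      ≤ m * ∫ x, f x ^ (m + 1) ∂μ + ∫ x, g x ^ (m + 1) ∂μ := by
    rw [← integral_const_mul, ← integral_const_mul, ← integral_add (hfm.const_mul _) hgm]
    exact integral_mono (hfg.const_mul _) ((hfm.const_mul _).add hgm)
      fun x ↦ succ_mul_pow_mul_le (hf x) (hg x) m
  rw [heq, ← add_one_mul] at hint
  exact le_of_mul_le_mul_left hint (by positivity)

end Inequalities

theorem sum_piFinset_filter_apply_eq {ι κ R : Type*} [Fintype ι] [DecidableEq ι] [DecidableEq κ]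
    [CommSemiring R] (s : Finset κ) (φ : κ → R) {a b : ι} (hab : a ≠ b) :
    ∑ x ∈ Fintype.piFinset fun _ : ι ↦ s with x a = x b, ∏ i, φ (x i)
      = (∑ z ∈ s, φ z ^ 2) * (∑ z ∈ s, φ z) ^ (Fintype.card ι - 2) := by
  let box (z : κ) (i : ι) : Finset κ := if i ∈ ({a, b} : Finset ι) then {z} else s
  have hfiber (z : κ) (hz : z ∈ s) :
      {x ∈ Fintype.piFinset fun _ : ι ↦ s | x a = x b ∧ x a = z}
        = Fintype.piFinset (box z) := by
    ext x
    simp only [box, mem_filter, Fintype.mem_piFinset, mem_insert, mem_singleton]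
    grind
  have hprod (z : κ) : ∏ i, ∑ w ∈ box z i, φ w
      = φ z ^ 2 * (∑ w ∈ s, φ w) ^ (Fintype.card ι - 2) := by
    have hcard : #{i | i ∈ ({a, b} : Finset ι)} = 2 := by
      rw [filter_univ_mem, card_pair hab]
    have hcompl : #{i | i ∉ ({a, b} : Finset ι)} = Fintype.card ι - 2 := by
      rw [filter_not, card_univ_sdiff, hcard]
    simp_rw [box, apply_ite (fun t : Finset κ ↦ ∑ w ∈ t, φ w), sum_singleton]
    rw [prod_ite, prod_const, prod_const, hcard, hcompl]
  rw [← sum_fiberwise_of_maps_to (g := fun x ↦ x a) (t := s)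
    fun x hx ↦ Fintype.mem_piFinset.1 (mem_filter.1 hx).1 a, sum_mul]
  refine sum_congr rfl fun z hz ↦ ?_
  rw [filter_filter, hfiber z hz, ← prod_univ_sum, hprod]

section ExponentialSums

theorem fourier_sum {T : ℝ} {ι : Type*} (s : Finset ι) (u : ι → ℤ) (θ : AddCircle T) :
    fourier (∑ i ∈ s, u i) θ = ∏ i ∈ s, fourier (u i) θ := by
  classical
  induction s using Finset.induction_on with
  | empty => simp
  | insert i s hi ih => rw [sum_insert hi, prod_insert hi, fourier_add, ih]

theorem integral_fourier {T : ℝ} [Fact (0 < T)] (n : ℤ) :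
    ∫ θ : AddCircle T, fourier n θ ∂haarAddCircle = if n = 0 then 1 else 0 := by
  have h := orthonormal_iff_ite.1 (orthonormal_fourier (T := T)) 0 n
  rw [ContinuousMap.inner_toLp] at h
  simpa [eq_comm] using h

theorem integral_sum_fourier_mul_conj {T : ℝ} [Fact (0 < T)] {ι κ : Type*} (s : Finset ι)
    (t : Finset κ) (u : ι → ℤ) (v : κ → ℤ) :
    ∫ θ : AddCircle T, (∑ x ∈ s, fourier (u x) θ) * conj (∑ y ∈ t, fourier (v y) θ) ∂haarAddCircle
      = (#{p ∈ s ×ˢ t | u p.1 = v p.2} : ℂ) := by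
  have hint (n : ℤ) : Integrable (fun θ : AddCircle T ↦ fourier n θ) haarAddCircle :=
    (fourier n).continuous.integrable_of_hasCompactSupport (.of_compactSpace _)
  simp_rw [map_sum, sum_mul_sum, ← sum_product', ← fourier_neg, ← fourier_add]
  rw [integral_finsetSum _ fun p _ ↦ hint _]
  simp_rw [integral_fourier, ← sub_eq_add_neg, sub_eq_zero, sum_boole]

/-- The exponential sum `∑ a ∈ A, e(aθ)` on the unit circle. -/
noncomputable def expSum (A : Finset ℤ) (θ : UnitAddCircle) : ℂ := ∑ a ∈ A, fourier a θ

variable (A : Finset ℤ)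

@[fun_prop]
theorem continuous_expSum : Continuous (expSum A) := by
  unfold expSum; fun_prop

theorem expSum_pow (j : ℕ) (θ : UnitAddCircle) :
    expSum A θ ^ j = ∑ x ∈ Fintype.piFinset fun _ : Fin j ↦ A, fourier (∑ i, x i) θ := by
  simp_rw [expSum, sum_pow', fourier_sum]

theorem integrable_of_continuous_unitAddCircle {F : UnitAddCircle → ℝ} (hF : Continuous F) :
    Integrable F haarAddCircle :=
  hF.integrable_of_hasCompactSupport (.of_compactSpace _)

theorem integral_norm_expSum_pow (j : ℕ) :
    ∫ θ, (‖expSum A θ‖ ^ 2) ^ j ∂haarAddCircle = Mcount j A := by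
  have h := integral_sum_fourier_mul_conj (T := 1) (Fintype.piFinset fun _ : Fin j ↦ A)
    (Fintype.piFinset fun _ : Fin j ↦ A) (fun x ↦ ∑ i, x i) fun x ↦ ∑ i, x i
  simp_rw [← expSum_pow, Complex.mul_conj, Complex.normSq_eq_norm_sq, norm_pow,
    pow_right_comm _ j] at h
  rw [integral_complex_ofReal] at h
  exact_mod_cast h

theorem integral_norm_expSum_nsmul_pow (j : ℕ) {n : ℕ} (hn : n ≠ 0) :
    ∫ θ, (‖expSum A (n • θ)‖ ^ 2) ^ j ∂haarAddCircle = Mcount j A := by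
  have hmp : MeasurePreserving (fun θ : UnitAddCircle ↦ (n : ℤ) • θ) haarAddCircle haarAddCircle :=
    Measure.measurePreserving_zsmul _ (mod_cast hn)
  simp only [natCast_zsmul] at hmp
  have hcont : Continuous fun θ ↦ (‖expSum A θ‖ ^ 2) ^ j := by fun_prop
  have hmap := integral_map hmp.aemeasurable
    (hcont.aestronglyMeasurable (μ := haarAddCircle.map (n • ·)))
  rw [hmp.map_eq, integral_norm_expSum_pow] at hmap
  exact hmap.symm

end ExponentialSums

section Moments

theorem Mcount_pos {A : Finset ℤ} (hA : A.Nonempty) (j : ℕ) : 0 < Mcount j A := by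
  obtain ⟨a, ha⟩ := hA
  exact card_pos.2 ⟨(fun _ ↦ a, fun _ ↦ a), by simp [ha]⟩

variable (A : Finset ℤ) (j : ℕ)

theorem sq_Mcount_succ_le : (Mcount (j + 1) A : ℝ) ^ 2 ≤ Mcount j A * Mcount (j + 2) A := by
  simp_rw [← integral_norm_expSum_pow]
  apply sq_integral_pow_succ_le (fun θ ↦ sq_nonneg _) <;>
    exact integrable_of_continuous_unitAddCircle (by fun_prop)

theorem card_mul_Mcount_le : #A * Mcount j A ≤ Mcount (j + 1) A := by
  classical
  rw [Mcount, ← card_product]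
  refine card_le_card_of_injOn
    (fun w ↦ (Fin.cons w.1 w.2.1, Fin.cons w.1 w.2.2)) ?_ ?_
  · intro w hw
    simp_all [Fin.forall_fin_succ, Fin.sum_univ_succ]
  · intro w _ w' _ h
    simp_all [Prod.ext_iff, Fin.cons_inj]

end Moments

section Collisions

variable (A : Finset ℤ) {j : ℕ}

open scoped Classical in
/-- The number of solutions counted by `Mcount j A` in which `x_a = x_b`. -/
noncomputable def collisionCount (A : Finset ℤ) (a b : Fin j) : ℕ :=
  #{p ∈ (Fintype.piFinset fun _ : Fin j ↦ A) ×ˢ (Fintype.piFinset fun _ : Fin j ↦ A) |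
    ∑ i, p.1 i = ∑ i, p.2 i ∧ p.1 a = p.1 b}

theorem collisionCount_eq_integral {a b : Fin j} (hab : a ≠ b) :
    (collisionCount A a b : ℂ) = ∫ θ, expSum A (2 • θ) * expSum A θ ^ (j - 2)
      * conj (expSum A θ ^ j) ∂haarAddCircle := by
  have hsum (θ : UnitAddCircle) :
      ∑ x ∈ Fintype.piFinset fun _ : Fin j ↦ A with x a = x b, fourier (∑ i, x i) θ
        = expSum A (2 • θ) * expSum A θ ^ (j - 2) := by
    simp_rw [fourier_sum]
    rw [sum_piFinset_filter_apply_eq A (fun z ↦ fourier z θ) hab, Fintype.card_fin]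
    congr 1
    refine sum_congr rfl fun z _ ↦ ?_
    simp only [fourier_apply, sq, ← Circle.coe_mul, ← toCircle_add]
    rw [two_nsmul, zsmul_add]
  simp_rw [← hsum, expSum_pow, integral_sum_fourier_mul_conj]
  rw [collisionCount]
  congr 2
  ext p
  simp only [mem_filter, mem_product]
  tauto

theorem collisionCount_le_integral {a b : Fin j} (hab : a ≠ b) :
    (collisionCount A a b : ℝ)
      ≤ ∫ θ, ‖expSum A (2 • θ)‖ * (‖expSum A θ‖ ^ 2) ^ (j - 1) ∂haarAddCircle := by
  have hj : j - 2 + j = 2 * (j - 1) := by omega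
  calc (collisionCount A a b : ℝ) = ‖(collisionCount A a b : ℂ)‖ := (Complex.norm_natCast _).symm
    _ ≤ ∫ θ, ‖expSum A (2 • θ) * expSum A θ ^ (j - 2) * conj (expSum A θ ^ j)‖ ∂haarAddCircle := by
        rw [collisionCount_eq_integral A hab]
        exact norm_integral_le_integral_norm _
    _ = _ := by
        simp_rw [norm_mul, RCLike.norm_conj, norm_pow, mul_assoc, ← pow_add, hj, pow_mul]

theorem sqrt_card_mul_collisionCount_le {a b : Fin j} (hab : a ≠ b) :
    √(#A : ℝ) * collisionCount A a b ≤ Mcount j A := by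
  obtain ⟨m, rfl⟩ : ∃ m, j = m + 1 := ⟨j - 1, by have := a.pos; omega⟩
  set F : UnitAddCircle → ℝ := fun θ ↦ ‖expSum A θ‖ ^ 2
  set G : UnitAddCircle → ℝ := fun θ ↦ ‖expSum A (2 • θ)‖
  have hFc : Continuous F := by fun_prop
  have hGc : Continuous G := by fun_prop
  have hmixed : ∫ θ, F θ ^ m * G θ ^ 2 ∂haarAddCircle ≤ Mcount (m + 1) A := by
    rw [← integral_norm_expSum_pow]
    refine integral_pow_mul_le_of_integral_pow_eq (fun _ ↦ by positivity) (fun _ ↦ by positivity)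
      ?_ ?_ ?_ (by rw [integral_norm_expSum_pow, integral_norm_expSum_nsmul_pow A _ two_ne_zero])
    all_goals exact integrable_of_continuous_unitAddCircle (by fun_prop)
  have hlower : (#A : ℝ) * Mcount m A ≤ Mcount (m + 1) A := mod_cast card_mul_Mcount_le A m
  have hamgm : 2 * (√(#A : ℝ) * ∫ θ, G θ * F θ ^ m ∂haarAddCircle)
      ≤ #A * Mcount m A + ∫ θ, F θ ^ m * G θ ^ 2 ∂haarAddCircle := by
    rw [← integral_norm_expSum_pow, ← integral_const_mul, ← integral_const_mul,
      ← integral_const_mul, ← integral_add]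
    · refine integral_mono (integrable_of_continuous_unitAddCircle (by fun_prop))
        (integrable_of_continuous_unitAddCircle (by fun_prop)) fun θ ↦ ?_
      have hsq : 0 ≤ F θ ^ m * (√(#A : ℝ) - G θ) ^ 2 := by positivity
      have hcard : √(#A : ℝ) ^ 2 = #A := Real.sq_sqrt (Nat.cast_nonneg _)
      linear_combination hsq + F θ ^ m * hcard
    all_goals exact integrable_of_continuous_unitAddCircle (by fun_prop)
  have hcollision := mul_le_mul_of_nonneg_left (collisionCount_le_integral A hab)
    (Real.sqrt_nonneg (#A : ℝ))
  rw [Nat.add_sub_cancel] at hcollision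
  linarith

theorem Mcount_le_Scount_add :
    Mcount j A ≤ Scount j A + 2 * ∑ q ∈ (univ : Finset (Fin j)).offDiag,
      collisionCount A q.1 q.2 := by
  classical
  let sols : Finset ((Fin j → ℤ) × (Fin j → ℤ)) :=
    {p ∈ (Fintype.piFinset fun _ ↦ A) ×ˢ (Fintype.piFinset fun _ ↦ A) | ∑ i, p.1 i = ∑ i, p.2 i}
  have hleft (q : Fin j × Fin j) : #{p ∈ sols | p.1 q.1 = p.1 q.2} = collisionCount A q.1 q.2 := by
    rw [filter_filter, collisionCount]
  have hright (q : Fin j × Fin j) :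
      #{p ∈ sols | p.2 q.1 = p.2 q.2} = collisionCount A q.1 q.2 := by
    rw [← hleft]
    refine card_equiv (Equiv.prodComm _ _) fun p ↦ ?_
    simp only [sols, mem_filter, mem_product, Equiv.prodComm_apply, Prod.fst_swap, Prod.snd_swap]
    tauto
  have hcover : sols ⊆ {p ∈ sols | Function.Injective p.1 ∧ Function.Injective p.2} ∪
      univ.offDiag.biUnion fun q ↦
        {p ∈ sols | p.1 q.1 = p.1 q.2} ∪ {p ∈ sols | p.2 q.1 = p.2 q.2} := by
    intro p hp
    simp only [mem_union, mem_biUnion, mem_filter, mem_offDiag, mem_univ, true_and, hp, Prod.exists]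
    by_cases hx : Function.Injective p.1
    · by_cases hy : Function.Injective p.2
      · exact .inl ⟨hx, hy⟩
      · obtain ⟨a, b, hab, hne⟩ := Function.not_injective_iff.1 hy
        exact .inr ⟨a, b, hne, .inr hab⟩
    · obtain ⟨a, b, hab, hne⟩ := Function.not_injective_iff.1 hx
      exact .inr ⟨a, b, hne, .inl hab⟩
  calc Mcount j A = #sols := rfl
    _ ≤ #{p ∈ sols | Function.Injective p.1 ∧ Function.Injective p.2} +
          ∑ q ∈ univ.offDiag, (#{p ∈ sols | p.1 q.1 = p.1 q.2} +
            #{p ∈ sols | p.2 q.1 = p.2 q.2}) := by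
        refine (card_le_card hcover).trans <| (card_union_le _ _).trans ?_
        gcongr
        exact card_biUnion_le.trans (sum_le_sum fun q _ ↦ card_union_le _ _)
    _ = Scount j A + 2 * ∑ q ∈ univ.offDiag, collisionCount A q.1 q.2 := by
        simp_rw [hleft, hright, ← two_mul, ← mul_sum]
        rw [filter_filter, Scount]

theorem sqrt_card_mul_sum_collisionCount_le :
    √(#A : ℝ) * ∑ q ∈ (univ : Finset (Fin j)).offDiag, (collisionCount A q.1 q.2 : ℝ)
      ≤ j ^ 2 * Mcount j A := by
  have hcard : #(univ : Finset (Fin j)).offDiag ≤ j ^ 2 := by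
    simp [offDiag_card, sq]
  rw [mul_sum]
  calc ∑ q ∈ (univ : Finset (Fin j)).offDiag, √(#A : ℝ) * collisionCount A q.1 q.2
      ≤ ∑ _q ∈ (univ : Finset (Fin j)).offDiag, (Mcount j A : ℝ) :=
        sum_le_sum fun _ hq ↦ sqrt_card_mul_collisionCount_le A (mem_offDiag.1 hq).2.2
    _ = #(univ : Finset (Fin j)).offDiag * Mcount j A := by rw [sum_const, nsmul_eq_mul]
    _ ≤ j ^ 2 * Mcount j A := by gcongr; exact_mod_cast hcard

theorem Scount_le_Mcount : Scount j A ≤ Mcount j A :=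
  card_le_card <| monotone_filter_right _ fun _ _ h ↦ h.1

theorem Mcount_le_two_mul_Scount (hA : 16 * j ^ 4 ≤ #A) : Mcount j A ≤ 2 * Scount j A := by
  have hsplit := Mcount_le_Scount_add (j := j) A
  obtain rfl | hj := j.eq_zero_or_pos
  · rw [univ_eq_empty, offDiag_empty, sum_empty] at hsplit
    omega
  have hsqrt : 4 * (j : ℝ) ^ 2 ≤ √(#A : ℝ) := by
    refine Real.le_sqrt_of_sq_le ?_
    calc (4 * (j : ℝ) ^ 2) ^ 2 = 16 * (j : ℝ) ^ 4 := by ring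
      _ ≤ (#A : ℝ) := mod_cast hA
  have hcollisions :
      4 * ∑ q ∈ (univ : Finset (Fin j)).offDiag, collisionCount A q.1 q.2 ≤ Mcount j A := by
    have hsum := sqrt_card_mul_sum_collisionCount_le (j := j) A
    rify
    refine le_of_mul_le_mul_left (hsum.trans' ?_) (by positivity : (0 : ℝ) < j ^ 2)
    rw [← mul_assoc, mul_comm ((j : ℝ) ^ 2)]
    gcongr
  omega

end Collisions

theorem IsWeakBkSet.Scount_succ_le {A : Finset ℤ} {m : ℕ} (hA : IsWeakBkSet (m + 1) A) :
    Scount (m + 1) A ≤ (m + 1) ^ 2 * #A * Scount m A := by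
  classical
  let T : Finset ((Fin m → ℤ) × (Fin m → ℤ)) :=
    {p ∈ (Fintype.piFinset fun _ ↦ A) ×ˢ (Fintype.piFinset fun _ ↦ A) |
      ∑ i, p.1 i = ∑ i, p.2 i ∧ Function.Injective p.1 ∧ Function.Injective p.2}
  have hcard : #((univ : Finset (Fin (m + 1) × Fin (m + 1))) ×ˢ A ×ˢ T)
      = (m + 1) ^ 2 * #A * Scount m A := by
    rw [card_product, card_product, card_univ, Fintype.card_prod, Fintype.card_fin, ← sq,
      mul_assoc]
    congr
  rw [← hcard, Scount]
  refine card_le_card_of_surjOn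
    (fun w ↦ (w.1.1.insertNth w.2.1 w.2.2.1, w.1.2.insertNth w.2.1 w.2.2.2)) ?_
  rintro ⟨x, y⟩ hxy
  simp only [mem_coe, mem_filter, mem_product, Fintype.mem_piFinset] at hxy
  obtain ⟨⟨hx, hy⟩, hsum, hxinj, hyinj⟩ := hxy
  obtain ⟨i, j, hij⟩ := hA x y hx hy hsum hxinj hyinj
  refine ⟨((i, j), x i, i.removeNth x, j.removeNth y), ?_, ?_⟩
  · rw [Fin.sum_univ_succAbove x i, Fin.sum_univ_succAbove y j, hij, add_right_inj] at hsum
    simp only [T, mem_coe, mem_product, mem_univ, mem_filter, Fintype.mem_piFinset, true_and]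
    exact ⟨hx i, ⟨fun _ ↦ hx _, fun _ ↦ hy _⟩, hsum, hxinj.comp Fin.succAbove_right_injective,
      hyinj.comp Fin.succAbove_right_injective⟩
  · ext : 1
    · exact Fin.insertNth_self_removeNth i x
    · simp only [hij, Fin.insertNth_self_removeNth]

theorem Sk_le_Sl (k l : ℕ) (hl : 1 ≤ l) (hlk : l < k) (A : Finset ℤ)
    (hA : 16 * k ^ 4 ≤ A.card) (hweak : IsWeakBkSet k A) :
    (Scount k A : ℝ) ≤ (Real.sqrt 2 * k) ^ (2 * (k - l)) * (A.card : ℝ) ^ (k - l) * (Scount l A : ℝ) := by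
  obtain ⟨d, rfl⟩ : ∃ d, k = l + d + 1 := ⟨k - l - 1, by omega⟩
  have hA₀ : A.Nonempty := card_pos.1 (hA.trans_lt' (by positivity))
  have hMk : (Mcount (l + d + 1) A : ℝ) ≤ 2 * Scount (l + d + 1) A :=
    mod_cast Mcount_le_two_mul_Scount A hA
  have hMl : (Mcount l A : ℝ) ≤ 2 * Scount l A :=
    mod_cast Mcount_le_two_mul_Scount A (hA.trans' (by gcongr))
  set R : ℝ := 2 * (l + d + 1 : ℕ) ^ 2 * #A with hR
  have hSM : (Scount (l + d + 1) A : ℝ) ≤ R / 2 * Mcount (l + d) A := by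
    have h := hweak.Scount_succ_le.trans (Nat.mul_le_mul_left _ (Scount_le_Mcount A))
    rify at h
    rw [hR]
    push_cast
    linear_combination h
  have hdescend : (Mcount (l + d) A : ℝ) ≤ R ^ d * Mcount l A :=
    le_pow_mul_of_sq_le_mul (u := fun j ↦ Mcount j A) (fun j ↦ mod_cast Mcount_pos hA₀ j)
      (sq_Mcount_succ_le A) l d (by linarith)
  calc (Scount (l + d + 1) A : ℝ) ≤ R / 2 * Mcount (l + d) A := hSM
    _ ≤ R / 2 * (R ^ d * (2 * Scount l A)) := by gcongr; exact hdescend.trans (by gcongr)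
    _ = R ^ (d + 1) * Scount l A := by ring
    _ = _ := by
        rw [show l + d + 1 - l = d + 1 by omega, pow_mul, ← mul_pow, mul_pow √2,
          Real.sq_sqrt zero_le_two]
end

section
/- Let A be a B_k*-set with |A| ≥ 20k^6. Then M_k(A) ≤ 2k · 8^k · k^{3k/2} · |A|^k, where M_k(A) is the number of solutions to x_1+...+x_k = y_1+...+y_k with all variables in A. -/
open Finset

/-!
Let `z a` be the character `t ↦ exp (2πiat)` of the circle, `p m` the sum of `z a ^ m` over `a ∈ A`,
and `D i j` the sum of `z a₁ ⋯ z aᵢ * conj (z b₁ ⋯ z bⱼ)` over all tuples of distinct elements of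
`A`. If `A` is a weak `B_k`-set, no term of `D k k` has frequency `0`, so `D k k` has mean `0`.

The difference `D (i + 1) j - p 1 * D i j` consists of the terms where the new element repeats an
old one. Such an element then carries the weight `z ^ 2` or `z * conj z = 1`, so these terms are
controlled by the `p m` with `2 ≤ m ≤ k` and by `k * #A`. Where `|p 1|` dominates these `|p m|` and
`√(k * #A)`, the step from `D i j` to `D (i + 1) j` is close to multiplication by `p 1`, and the
real part of `D k k` is at least `(9 / 16) ^ k * |p 1| ^ (2k)`. Elsewhere, `|D k k|` and
`|p 1| ^ (2k)` are at most `(10 * k * #A) ^ k` plus a small multiple of the sum of the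
`|p m| ^ (2k)`. For every `m ≠ 0` the mean of `|p m| ^ (2k)` is `M_k(A)`, so taking means bounds
`M_k(A)` by a multiple of `(k * #A) ^ k` plus a multiple of itself small enough to be absorbed.
-/

section Algebra

variable {ι R S : Type*} [CommSemiring R] [CommSemiring S]

theorem mul_pow_eq_pow_mul_add {E : Type*} [Semiring E] {x y c : E} (h : x * y = y * x + c)
    (hc : Commute c y) (n : ℕ) : x * y ^ n = y ^ n * x + n * (c * y ^ (n - 1)) := by
  induction n with
  | zero => simp
  | succ n ih =>
    have hpow : (n : E) * (c * y ^ (n - 1)) * y = n * (c * y ^ n) := by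
      cases n with
      | zero => simp
      | succ n => rw [Nat.add_sub_cancel, mul_assoc, mul_assoc, ← pow_succ]
    calc x * y ^ (n + 1) = (y ^ n * x + n * (c * y ^ (n - 1))) * y := by
          rw [pow_succ, ← mul_assoc, ih]
      _ = y ^ n * (y * x + c) + n * (c * y ^ n) := by rw [add_mul, hpow, mul_assoc, h]
      _ = y ^ (n + 1) * x + (c * y ^ n + n * (c * y ^ n)) := by
          rw [mul_add, ← mul_assoc, ← pow_succ, (hc.pow_right n).eq, add_assoc]
      _ = y ^ (n + 1) * x + (n + 1 : ℕ) * (c * y ^ (n + 1 - 1)) := by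
          rw [Nat.add_sub_cancel, Nat.cast_succ, add_mul, one_mul, add_comm (c * y ^ n)]

/-- Multiplication by `A ↦ ∑ a ∈ A, v a`, as an operator on functions of a finite set. -/
def sumMul (v : ι → R) : Module.End R (Finset ι → R) :=
  LinearMap.mulLeft R fun A => ∑ a ∈ A, v a

theorem sumMul_apply (v : ι → R) (F : Finset ι → R) (A : Finset ι) :
    sumMul v F A = (∑ a ∈ A, v a) * F A := rfl

variable [DecidableEq ι]

/-- The operator `F ↦ ∑ a ∈ A, w a * F (A \ {a})` on functions of a finite set. Products of such
operators, applied to the constant `1`, sum over tuples of *distinct* elements. -/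
def eraseSum (w : ι → R) : Module.End R (Finset ι → R) where
  toFun F A := ∑ a ∈ A, w a * F (A.erase a)
  map_add' F G := by
    ext A
    simp only [Pi.add_apply, mul_add, sum_add_distrib]
  map_smul' c F := by
    ext A
    simp only [Pi.smul_apply, smul_eq_mul, RingHom.id_apply, mul_sum, mul_left_comm]

theorem eraseSum_apply (w : ι → R) (F : Finset ι → R) (A : Finset ι) :
    eraseSum w F A = ∑ a ∈ A, w a * F (A.erase a) := rfl

theorem commute_eraseSum (v w : ι → R) : Commute (eraseSum v) (eraseSum w) := by
  ext1 F
  ext A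
  simp only [Module.End.mul_apply, eraseSum_apply, mul_sum]
  rw [sum_comm' (t' := A) (s' := fun b => A.erase b)
    (by simp only [mem_erase, ne_eq]; tauto)]
  refine sum_congr rfl fun b _ => sum_congr rfl fun a _ => ?_
  rw [erase_right_comm, mul_left_comm]

/-- The sum of `z a₁ ⋯ z aᵢ * w b₁ ⋯ w bⱼ` over all tuples of `i + j` pairwise distinct elements
`a₁, …, aᵢ, b₁, …, bⱼ` of a finite set. -/
def distinctSum (z w : ι → R) (i j : ℕ) : Finset ι → R :=
  (eraseSum z ^ i * eraseSum w ^ j) 1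

theorem distinctSum_zero_zero (z w : ι → R) (A : Finset ι) : distinctSum z w 0 0 A = 1 := rfl

theorem distinctSum_succ_left (z w : ι → R) (i j : ℕ) :
    distinctSum z w (i + 1) j = eraseSum z (distinctSum z w i j) := by
  rw [distinctSum, pow_succ', mul_assoc, Module.End.mul_apply, distinctSum]

theorem distinctSum_swap (z w : ι → R) (i j : ℕ) : distinctSum z w i j = distinctSum w z j i := by
  rw [distinctSum, ((commute_eraseSum z w).pow_pow i j).eq, distinctSum]

theorem distinctSum_succ_right (z w : ι → R) (i j : ℕ) :
    distinctSum z w i (j + 1) = eraseSum w (distinctSum z w i j) := by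
  rw [distinctSum_swap, distinctSum_succ_left, distinctSum_swap]

theorem sumMul_one (v : ι → R) : sumMul v 1 = eraseSum v 1 := by
  ext A
  simp only [sumMul_apply, eraseSum_apply, Pi.one_apply, mul_one]

theorem sumMul_mul_eraseSum (v w : ι → R) :
    sumMul v * eraseSum w = eraseSum w * sumMul v + eraseSum (v * w) := by
  ext1 F
  ext A
  simp only [Module.End.mul_apply, LinearMap.add_apply, Pi.add_apply, sumMul_apply, eraseSum_apply,
    mul_sum, ← sum_add_distrib]
  refine sum_congr rfl fun a ha => ?_
  rw [← add_sum_erase A v ha, Pi.mul_apply]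
  ring

theorem sumMul_distinctSum (v z w : ι → R) (i j : ℕ) :
    sumMul v (distinctSum z w i j) = eraseSum v (distinctSum z w i j) +
      (i • eraseSum (v * z) (distinctSum z w (i - 1) j) +
        j • eraseSum (v * w) (distinctSum z w i (j - 1))) := by
  have hz := mul_pow_eq_pow_mul_add (sumMul_mul_eraseSum v z) (commute_eraseSum _ z) i
  have hw := mul_pow_eq_pow_mul_add (sumMul_mul_eraseSum v w) (commute_eraseSum _ w) j
  have hcomm (u : ι → R) (F : Finset ι → R) :
      (eraseSum z ^ i) (eraseSum u F) = eraseSum u ((eraseSum z ^ i) F) :=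
    LinearMap.congr_fun ((commute_eraseSum z u).pow_left i).eq F
  have hcomm' : (eraseSum w ^ j) (eraseSum v 1) = eraseSum v ((eraseSum w ^ j) 1) :=
    LinearMap.congr_fun ((commute_eraseSum w v).pow_left j).eq 1
  calc sumMul v (distinctSum z w i j) = (sumMul v * eraseSum z ^ i) ((eraseSum w ^ j) 1) := rfl
    _ = (eraseSum z ^ i) ((sumMul v * eraseSum w ^ j) 1) +
          i • eraseSum (v * z) (distinctSum z w (i - 1) j) := by
      rw [hz, ← nsmul_eq_mul]; rfl
    _ = (eraseSum z ^ i) (eraseSum v ((eraseSum w ^ j) 1)) +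
          (eraseSum z ^ i) (j • eraseSum (v * w) ((eraseSum w ^ (j - 1)) 1)) +
          i • eraseSum (v * z) (distinctSum z w (i - 1) j) := by
      rw [hw, ← nsmul_eq_mul, ← hcomm', ← sumMul_one, ← map_add]; rfl
    _ = _ := by
      rw [map_nsmul, hcomm, hcomm, add_assoc, add_comm (j • _)]; rfl

theorem map_eraseSum (φ : R →+* S) (w : ι → R) (F : Finset ι → R) :
    φ ∘ eraseSum w F = eraseSum (φ ∘ w) (φ ∘ F) := by
  ext A
  simp only [Function.comp_apply, eraseSum_apply, map_sum, map_mul]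

theorem map_distinctSum (φ : R →+* S) (z w : ι → R) (i j : ℕ) :
    φ ∘ distinctSum z w i j = distinctSum (φ ∘ z) (φ ∘ w) i j := by
  induction i with
  | zero =>
    induction j with
    | zero => ext A; simp [distinctSum_zero_zero]
    | succ j ih => rw [distinctSum_succ_right, map_eraseSum, ih, distinctSum_succ_right]
  | succ i ih => rw [distinctSum_succ_left, map_eraseSum, ih, distinctSum_succ_left]

end Algebra

section Recursion

variable {ι R : Type*} [DecidableEq ι] [CommRing R]

theorem eraseSum_distinctSum_apply (v z w : ι → R) (i j : ℕ) (A : Finset ι) :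
    eraseSum v (distinctSum z w i j) A = (∑ a ∈ A, v a) * distinctSum z w i j A -
      (i * eraseSum (v * z) (distinctSum z w (i - 1) j) A +
        j * eraseSum (v * w) (distinctSum z w i (j - 1)) A) := by
  have h := congr_fun (sumMul_distinctSum v z w i j) A
  simp only [sumMul_apply, Pi.add_apply, Pi.smul_apply] at h
  rw [nsmul_eq_mul, nsmul_eq_mul] at h
  rw [h, add_sub_cancel_right]

theorem eraseSum_one_distinctSum_apply (z w : ι → R) (i j : ℕ) (A : Finset ι) :
    eraseSum 1 (distinctSum z w i j) A = (#A - i - j) * distinctSum z w i j A := by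
  have hleft : i * eraseSum z (distinctSum z w (i - 1) j) A = i * distinctSum z w i j A := by
    cases i with
    | zero => simp
    | succ i => rw [Nat.add_sub_cancel, distinctSum_succ_left]
  have hright : j * eraseSum w (distinctSum z w i (j - 1)) A = j * distinctSum z w i j A := by
    cases j with
    | zero => simp
    | succ j => rw [Nat.add_sub_cancel, distinctSum_succ_right]
  rw [eraseSum_distinctSum_apply, one_mul, one_mul, hleft, hright]
  simp only [Pi.one_apply, sum_const, nsmul_eq_mul, mul_one]
  ring

end Recursion

section Submonoid

variable {ι R : Type*} [DecidableEq ι] [CommSemiring R] {S : AddSubmonoid R} {A : Finset ι}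

theorem mul_eraseSum_pow_mem {w : ι → R} {F : Finset ι → R} {n : ℕ} {c : R}
    (h : ∀ I ⊆ A, #I = n → c * ((∏ a ∈ I, w a) * F (A \ I)) ∈ S) :
    c * (eraseSum w ^ n) F A ∈ S := by
  induction n generalizing A c with
  | zero => simpa using h ∅ (empty_subset A) card_empty
  | succ n ih =>
    rw [pow_succ', Module.End.mul_apply, eraseSum_apply, mul_sum]
    refine S.sum_mem fun a ha => ?_
    rw [← mul_assoc]
    refine ih fun I hI hcard => ?_
    have haI : a ∉ I := fun hmem => notMem_erase a A (hI hmem)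
    have hins := h (insert a I) (insert_subset ha (hI.trans (erase_subset a A)))
      (by rw [card_insert_of_notMem haI, hcard])
    rwa [prod_insert haI, sdiff_insert, ← erase_sdiff_comm, mul_assoc, ← mul_assoc c] at hins

theorem distinctSum_mem {z w : ι → R} {i j : ℕ}
    (h : ∀ I ⊆ A, ∀ J ⊆ A, Disjoint I J → #I = i → #J = j →
      (∏ a ∈ I, z a) * ∏ b ∈ J, w b ∈ S) : distinctSum z w i j A ∈ S := by
  rw [distinctSum, Module.End.mul_apply, ← one_mul ((eraseSum z ^ i) _ A)]
  refine mul_eraseSum_pow_mem fun I hI hi => ?_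
  rw [one_mul]
  refine mul_eraseSum_pow_mem fun J hJ hj => ?_
  rw [Pi.one_apply, mul_one]
  exact h I hI J (hJ.trans sdiff_subset) (disjoint_sdiff.mono_right hJ) hi hj

end Submonoid

/-- The power sum `∑ a ∈ A, z a ^ m`. -/
def powSum {ι R : Type*} [CommSemiring R] (z : ι → R) (m : ℕ) (A : Finset ι) : R :=
  ∑ a ∈ A, z a ^ m

section Unimodular

variable {ι : Type*} {z : ι → ℂ} {A : Finset ι}

/-- The regime where the first power sum dominates both the other power sums and `√(k #A)`. -/
structure IsLarge (z : ι → ℂ) (k : ℕ) (A : Finset ι) : Prop where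
  le_norm : 60 * k ≤ ‖powSum z 1 A‖
  card_le : 15 * k * #A ≤ 2 * ‖powSum z 1 A‖ ^ 2
  norm_le : ∀ m ∈ Icc 2 k, ‖powSum z m A‖ ≤ 14 / 5 * ‖powSum z 1 A‖

/-- The complementary regime, where `Q` controls `√(k #A)` and all the power sums. -/
structure IsSmall (z : ι → ℂ) (k : ℕ) (A : Finset ι) (Q : ℝ) : Prop where
  le_bound : 80 * k ≤ Q
  card_le : 10 * k * #A ≤ Q ^ 2
  norm_one_le : ‖powSum z 1 A‖ ≤ 13 / 15 * Q
  norm_le : ∀ m ∈ Icc 2 k, ‖powSum z m A‖ ≤ 12 / 5 * Q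

theorem exists_isSmall {k : ℕ} (hk : 2 ≤ k) (hkA : 640 * k ≤ #A) (hlarge : ¬ IsLarge z k A) :
    ∃ Q, IsSmall z k A Q ∧ Q ^ (2 * k) ≤ (10 * k * #A : ℝ) ^ k +
      (25 / 144) ^ k * ∑ m ∈ Icc 2 k, ‖powSum z m A‖ ^ (2 * k) := by
  obtain ⟨m, hm, hmax⟩ := (Icc 2 k).exists_max_image (fun m => ‖powSum z m A‖)
    (nonempty_Icc.mpr hk)
  set F := ‖powSum z 1 A‖ with hF
  set P := ‖powSum z m A‖ with hP
  set Q := max √(10 * k * #A) (5 / 12 * P) with hQ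
  have hsqrt : √(10 * k * #A) ≤ Q := le_max_left ..
  have hPQ : 5 / 12 * P ≤ Q := le_max_right ..
  have hcard : 10 * k * #A ≤ Q ^ 2 := Real.sqrt_le_iff.mp hsqrt |>.2
  have hn : (640 * k : ℝ) ≤ #A := mod_cast hkA
  have hkn : 640 * (k : ℝ) ^ 2 ≤ k * #A := by nlinarith
  have hQ0 : 0 ≤ Q := (Real.sqrt_nonneg _).trans hsqrt
  have hF13 : F ≤ 13 / 15 * Q := by
    by_contra! hFQ
    have hsq : (13 / 15 * Q) ^ 2 ≤ F ^ 2 := by gcongr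
    refine hlarge ⟨abs_le_of_sq_le_sq' ?_ (norm_nonneg _) |>.2, ?_, fun l hl => ?_⟩
    · nlinarith
    · nlinarith
    · linarith [hmax l hl]
  refine ⟨Q, ⟨abs_le_of_sq_le_sq' (by nlinarith) hQ0 |>.2, hcard, hF13, fun l hl => ?_⟩, ?_⟩
  · linarith [hmax l hl]
  · calc Q ^ (2 * k) ≤ √(10 * k * #A) ^ (2 * k) + (5 / 12 * P) ^ (2 * k) := by
          obtain hmaxQ | hmaxQ := max_choice √(10 * k * #A : ℝ) (5 / 12 * P) <;>
            rw [hQ, hmaxQ]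
          exacts [le_add_of_nonneg_right ((even_two_mul k).pow_nonneg _),
            le_add_of_nonneg_left ((even_two_mul k).pow_nonneg _)]
      _ = (10 * k * #A) ^ k + (25 / 144) ^ k * P ^ (2 * k) := by
          rw [pow_mul, Real.sq_sqrt (by positivity), mul_pow (5 / 12), pow_mul (5 / 12 : ℝ)]
          norm_num
      _ ≤ _ := by
          gcongr
          exact single_le_sum (f := fun m => ‖powSum z m A‖ ^ (2 * k)) (fun _ _ => by positivity) hm

theorem mul_star_eq_one (hz : ∀ a, ‖z a‖ = 1) : z * star z = 1 := by
  ext a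
  simp [Complex.mul_conj', hz a]

theorem norm_le_of_norm_sub_mul_le {p x y : ℂ} (h : ‖y - p * x‖ ≤ ‖p‖ / 4 * ‖x‖) :
    ‖y‖ ≤ 5 / 4 * ‖p‖ * ‖x‖ := by
  have htri := norm_sub_norm_le y (p * x)
  rw [norm_mul] at htri
  linarith

theorem le_norm_of_norm_sub_mul_le {p x y : ℂ} (h : ‖y - p * x‖ ≤ ‖p‖ / 4 * ‖x‖) :
    3 / 4 * ‖p‖ * ‖x‖ ≤ ‖y‖ := by
  have htri := norm_sub_norm_le (p * x) y
  rw [norm_mul, norm_sub_rev] at htri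
  linarith

variable [DecidableEq ι]

theorem star_distinctSum (z : ι → ℂ) (i j : ℕ) (A : Finset ι) :
    star (distinctSum z (star z) i j A) = distinctSum z (star z) j i A := by
  rw [distinctSum_swap z (star z) j i]
  refine (congr_fun (map_distinctSum (starRingEnd ℂ) z (star z) i j) A).trans ?_
  congr 2
  exact star_star z

theorem norm_distinctSum_comm (z : ι → ℂ) (i j : ℕ) (A : Finset ι) :
    ‖distinctSum z (star z) i j A‖ = ‖distinctSum z (star z) j i A‖ := by
  rw [← star_distinctSum, norm_star]

theorem norm_eraseSum_sub_le (hz : ∀ a, ‖z a‖ = 1) (m i j : ℕ) :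
    ‖eraseSum (z ^ (m + 1)) (distinctSum z (star z) i j) A -
        powSum z (m + 1) A * distinctSum z (star z) i j A‖ ≤
      i * ‖eraseSum (z ^ (m + 2)) (distinctSum z (star z) (i - 1) j) A‖ +
        j * ‖eraseSum (z ^ m) (distinctSum z (star z) i (j - 1)) A‖ := by
  have hstar : z ^ (m + 1) * star z = z ^ m := by
    rw [pow_succ, mul_assoc, mul_star_eq_one hz, mul_one]
  have hsum : ∑ a ∈ A, (z ^ (m + 1)) a = powSum z (m + 1) A := rfl
  rw [eraseSum_distinctSum_apply, hstar, ← pow_succ, hsum, sub_sub_cancel_left, norm_neg]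
  refine (norm_add_le _ _).trans_eq ?_
  simp only [norm_mul, Complex.norm_natCast]

theorem norm_distinctSum_succ_left_sub_le (hz : ∀ a, ‖z a‖ = 1) {i j : ℕ}
    (hij : i + j ≤ 2 * #A) :
    ‖distinctSum z (star z) (i + 1) j A - powSum z 1 A * distinctSum z (star z) i j A‖ ≤
      i * ‖eraseSum (z ^ 2) (distinctSum z (star z) (i - 1) j) A‖ +
        j * (#A * ‖distinctSum z (star z) i (j - 1) A‖) := by
  have h := norm_eraseSum_sub_le (A := A) hz 0 i j
  rw [zero_add, pow_one, ← distinctSum_succ_left, pow_zero, eraseSum_one_distinctSum_apply,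
    norm_mul] at h
  refine h.trans ?_
  cases j with
  | zero => simp
  | succ j =>
    have hcard : ‖(#A - i - (j + 1 - 1 : ℕ) : ℂ)‖ ≤ #A := by
      have hcast : (#A - i - (j + 1 - 1 : ℕ) : ℂ) = (((#A : ℤ) - (i : ℤ) - (j : ℤ) : ℤ) : ℂ) := by
        simp
      have habs : |(#A : ℤ) - i - j| ≤ #A := abs_le.mpr ⟨by omega, by omega⟩
      rw [hcast, Complex.norm_intCast, ← Int.cast_abs]
      exact_mod_cast habs
    gcongr

-- `Q` and `X` stand for the sizes of `p 1` and `D i j`: their norms in the large regime, `Q` and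
-- `Q ^ (i + j)` in the small one.
theorem norm_sub_le_of_prev_le {k i j : ℕ} {c ε δ Q X : ℝ} (hz : ∀ a, ‖z a‖ = 1) (hk : k ≤ #A)
    (hi : i < k) (hj : j ≤ k) (hc : 0 ≤ c) (hδ : 0 ≤ δ) (hQ : 0 ≤ Q) (hX : 0 ≤ X)
    (hck : c * k ≤ ε * Q) (hcard : k * #A ≤ δ * Q ^ 2)
    (hleft : 0 < i → ∀ m, 1 ≤ m → m + i ≤ k + 1 →
      ‖eraseSum (z ^ m) (distinctSum z (star z) (i - 1) j) A‖ ≤ c * X)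
    (hright : 0 < j → ∀ m, 1 ≤ m → m + i ≤ k →
      ‖eraseSum (z ^ m) (distinctSum z (star z) i (j - 1)) A‖ ≤ c * X)
    (hprev : 0 < j → Q * ‖distinctSum z (star z) i (j - 1) A‖ ≤ X) :
    ‖distinctSum z (star z) (i + 1) j A - powSum z 1 A * distinctSum z (star z) i j A‖ ≤
        (ε + δ) * Q * X ∧
      ∀ m, 2 ≤ m → m + i ≤ k →
        ‖eraseSum (z ^ m) (distinctSum z (star z) i j) A -
          powSum z m A * distinctSum z (star z) i j A‖ ≤ 2 * ε * Q * X := by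
  have hεX : 0 ≤ ε * Q * X := mul_nonneg ((by positivity : 0 ≤ c * k).trans hck) hX
  have hscale {l : ℕ} {y : ℝ} (hl : l ≤ k) (hy : 0 < l → y ≤ c * X) : l * y ≤ ε * Q * X := by
    obtain rfl | hl0 := Nat.eq_zero_or_pos l
    · rwa [Nat.cast_zero, zero_mul]
    calc l * y ≤ l * (c * X) := by gcongr; exact hy hl0
      _ ≤ k * (c * X) := by gcongr
      _ = c * k * X := by ring
      _ ≤ ε * Q * X := by gcongr
  have hleft' (m : ℕ) (hm : 1 ≤ m) (hmi : m + i ≤ k + 1) :=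
    hscale hi.le fun h => hleft h m hm hmi
  have hright' (m : ℕ) (hm : 1 ≤ m) (hmi : m + i ≤ k) :=
    hscale hj fun h => hright h m hm hmi
  have hcard' : j * (#A * ‖distinctSum z (star z) i (j - 1) A‖) ≤ δ * Q * X := by
    obtain rfl | hj0 := Nat.eq_zero_or_pos j
    · rw [Nat.cast_zero, zero_mul]
      positivity
    set Y := ‖distinctSum z (star z) i (j - 1) A‖
    calc j * (#A * Y) ≤ k * #A * Y := by rw [mul_assoc]; gcongr
      _ ≤ δ * Q ^ 2 * Y := by gcongr
      _ = δ * Q * (Q * Y) := by ring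
      _ ≤ δ * Q * X := by gcongr; exact hprev hj0
  constructor
  · linarith [norm_distinctSum_succ_left_sub_le (A := A) hz (i := i) (j := j) (by omega),
      hleft' 2 (by omega) (by omega)]
  · intro m hm hmi
    obtain ⟨m, rfl⟩ := Nat.exists_eq_add_of_le' (one_le_two.trans hm)
    linarith [norm_eraseSum_sub_le (A := A) hz m i j, hleft' (m + 2) (by omega) (by omega),
      hright' m (by omega) (by omega)]

theorem IsLarge.norm_sub_le_and_norm_eraseSum_le {k : ℕ} (h : IsLarge z k A)
    (hz : ∀ a, ‖z a‖ = 1) (hk : k ≤ #A) {i j : ℕ} (hi : i < k) (hj : j ≤ k) :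
    ‖distinctSum z (star z) (i + 1) j A - powSum z 1 A * distinctSum z (star z) i j A‖ ≤
        ‖powSum z 1 A‖ / 4 * ‖distinctSum z (star z) i j A‖ ∧
      ∀ m, 1 ≤ m → m + i ≤ k → ‖eraseSum (z ^ m) (distinctSum z (star z) i j) A‖ ≤
        3 * ‖powSum z 1 A‖ * ‖distinctSum z (star z) i j A‖ := by
  induction hs : i + j using Nat.strong_induction_on generalizing i j with | _ s ih
  have hprev (hj0 : 0 < j) : 3 / 4 * ‖powSum z 1 A‖ * ‖distinctSum z (star z) i (j - 1) A‖ ≤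
      ‖distinctSum z (star z) i j A‖ := by
    obtain ⟨j, rfl⟩ := Nat.exists_eq_add_one.mpr hj0
    have hlower := le_norm_of_norm_sub_mul_le (ih (j + i) (by omega) hj hi.le rfl).1
    rwa [norm_distinctSum_comm z j, norm_distinctSum_comm z (j + 1)] at hlower
  have hleft (hi0 : 0 < i) (m : ℕ) (hm : 1 ≤ m) (hmi : m + i ≤ k + 1) :
      ‖eraseSum (z ^ m) (distinctSum z (star z) (i - 1) j) A‖ ≤
        4 * ‖distinctSum z (star z) i j A‖ := by
    obtain ⟨i, rfl⟩ := Nat.exists_eq_add_one.mpr hi0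
    obtain ⟨hstep, hweight⟩ := ih (i + j) (by omega) (by omega) hj rfl
    rw [Nat.add_sub_cancel]
    linarith [le_norm_of_norm_sub_mul_le hstep, hweight m hm (by omega)]
  have hright (hj0 : 0 < j) (m : ℕ) (hm : 1 ≤ m) (hmi : m + i ≤ k) :
      ‖eraseSum (z ^ m) (distinctSum z (star z) i (j - 1)) A‖ ≤
        4 * ‖distinctSum z (star z) i j A‖ := by
    linarith [(ih (i + (j - 1)) (by omega) hi (by omega) rfl).2 m hm hmi, hprev hj0]
  obtain ⟨hstep, hweight⟩ := norm_sub_le_of_prev_le (ε := 4 / 45) (δ := 32 / 135) hz hk hi hj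
    (by norm_num) (by norm_num) (by positivity) (norm_nonneg _) (by linarith [h.le_norm])
    (by linarith [h.card_le]) hleft hright hprev
  have hFX : 0 ≤ ‖powSum z 1 A‖ * ‖distinctSum z (star z) i j A‖ := by positivity
  have hstep' : ‖distinctSum z (star z) (i + 1) j A -
      powSum z 1 A * distinctSum z (star z) i j A‖ ≤
        ‖powSum z 1 A‖ / 4 * ‖distinctSum z (star z) i j A‖ := by linarith
  refine ⟨hstep', fun m hm hmi => ?_⟩
  obtain rfl | hm2 := hm.eq_or_lt
  · rw [pow_one, ← distinctSum_succ_left]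
    linarith [norm_le_of_norm_sub_mul_le hstep']
  · have htri := norm_le_norm_add_norm_sub' (eraseSum (z ^ m) (distinctSum z (star z) i j) A)
      (powSum z m A * distinctSum z (star z) i j A)
    have hp := mul_le_mul_of_nonneg_right (h.norm_le m (mem_Icc.mpr ⟨hm2, by omega⟩))
      (norm_nonneg (distinctSum z (star z) i j A))
    rw [norm_mul] at htri
    linarith [hweight m hm2 hmi]

-- The phases of `p 1` and `conj (p 1)` cancel between a left and a right step, so positivity
-- propagates along the diagonal even though the relative errors accumulate.
theorem IsLarge.norm_diag_sub_le {k : ℕ} (h : IsLarge z k A) (hz : ∀ a, ‖z a‖ = 1)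
    (hk : k ≤ #A) {l : ℕ} (hl : l < k) :
    ‖distinctSum z (star z) (l + 1) (l + 1) A -
        (‖powSum z 1 A‖ ^ 2 : ℝ) * distinctSum z (star z) l l A‖ ≤
      9 / 16 * ‖powSum z 1 A‖ ^ 2 * ‖distinctSum z (star z) l l A‖ := by
  set p := powSum z 1 A
  set X := distinctSum z (star z) l l A
  set Y := distinctSum z (star z) l (l + 1) A
  have hY : ‖Y - star p * X‖ ≤ ‖p‖ / 4 * ‖X‖ := by
    have hstar : Y - star p * X = star (distinctSum z (star z) (l + 1) l A - p * X) := by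
      rw [star_sub, star_mul', star_distinctSum, star_distinctSum]
    rw [hstar, norm_star]
    exact (h.norm_sub_le_and_norm_eraseSum_le hz hk hl hl.le).1
  have hYnorm : ‖Y‖ ≤ 5 / 4 * ‖p‖ * ‖X‖ := by
    simpa only [norm_star] using norm_le_of_norm_sub_mul_le (p := star p) (by rwa [norm_star])
  have hsplit : distinctSum z (star z) (l + 1) (l + 1) A - (‖p‖ ^ 2 : ℝ) * X =
      distinctSum z (star z) (l + 1) (l + 1) A - p * Y + p * (Y - star p * X) := by
    rw [Complex.ofReal_pow, ← Complex.mul_conj', starRingEnd_apply]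
    ring
  calc _ ≤ ‖p‖ / 4 * ‖Y‖ + ‖p‖ * (‖p‖ / 4 * ‖X‖) := by
        rw [hsplit]
        refine (norm_add_le _ _).trans
          (add_le_add (h.norm_sub_le_and_norm_eraseSum_le hz hk hl hl).1 ?_)
        rw [norm_mul]
        gcongr
    _ ≤ ‖p‖ / 4 * (5 / 4 * ‖p‖ * ‖X‖) + ‖p‖ * (‖p‖ / 4 * ‖X‖) := by gcongr
    _ = 9 / 16 * ‖p‖ ^ 2 * ‖X‖ := by ring

theorem ofReal_re_distinctSum_diag (z : ι → ℂ) (l : ℕ) (A : Finset ι) :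
    ((distinctSum z (star z) l l A).re : ℂ) = distinctSum z (star z) l l A :=
  Complex.conj_eq_iff_re.mp (star_distinctSum z l l A)

theorem IsLarge.le_re_distinctSum {k : ℕ} (h : IsLarge z k A) (hz : ∀ a, ‖z a‖ = 1) (hk : k ≤ #A)
    {l : ℕ} (hl : l ≤ k) :
    (9 / 16) ^ l * ‖powSum z 1 A‖ ^ (2 * l) ≤ (distinctSum z (star z) l l A).re := by
  suffices hind : (9 / 16) ^ l * ‖powSum z 1 A‖ ^ (2 * l) ≤ ‖distinctSum z (star z) l l A‖ ∧
      ‖distinctSum z (star z) l l A‖ = (distinctSum z (star z) l l A).re from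
    hind.1.trans_eq hind.2
  induction l with
  | zero => simp [distinctSum_zero_zero]
  | succ l ih =>
    obtain ⟨hlower, hre⟩ := ih (by omega)
    have hstep {j : ℕ} (hj : j ≤ k) :=
      le_norm_of_norm_sub_mul_le (h.norm_sub_le_and_norm_eraseSum_le hz hk hl hj).1
    have hright := hstep hl
    rw [norm_distinctSum_comm z l (l + 1)] at hright
    have hdiag := (Complex.abs_re_le_norm _).trans (h.norm_diag_sub_le hz hk hl)
    rw [Complex.sub_re, Complex.re_ofReal_mul, ← hre] at hdiag
    have hnonneg : 0 ≤ ‖powSum z 1 A‖ ^ 2 * ‖distinctSum z (star z) l l A‖ := by positivity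
    constructor
    · calc (9 / 16) ^ (l + 1) * ‖powSum z 1 A‖ ^ (2 * (l + 1))
          = 3 / 4 * ‖powSum z 1 A‖ * (3 / 4 * ‖powSum z 1 A‖ *
              ((9 / 16) ^ l * ‖powSum z 1 A‖ ^ (2 * l))) := by ring
        _ ≤ 3 / 4 * ‖powSum z 1 A‖ * (3 / 4 * ‖powSum z 1 A‖ *
              ‖distinctSum z (star z) l l A‖) := by gcongr
        _ ≤ 3 / 4 * ‖powSum z 1 A‖ * ‖distinctSum z (star z) (l + 1) l A‖ := by
          gcongr
          exact hstep (Nat.le_of_succ_le hl)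
        _ ≤ _ := hright
    · have hpos : 0 ≤ (distinctSum z (star z) (l + 1) (l + 1) A).re := by
        linarith [neg_le_of_abs_le hdiag]
      nth_rewrite 1 [← ofReal_re_distinctSum_diag]
      exact Complex.norm_of_nonneg hpos

theorem norm_distinctSum_le_pow_of_succ_le {k s : ℕ} {Q : ℝ}
    (h : ∀ i j, i < k → j ≤ k → i + j < s →
      ‖distinctSum z (star z) (i + 1) j A‖ ≤ Q * Q ^ (i + j))
    {i j : ℕ} (hi : i ≤ k) (hj : j ≤ k) (hij : i + j ≤ s) :
    ‖distinctSum z (star z) i j A‖ ≤ Q ^ (i + j) := by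
  obtain _ | i := i
  · obtain _ | j := j
    · simp [distinctSum_zero_zero]
    · rw [norm_distinctSum_comm, zero_add, pow_succ']
      exact h j 0 (by omega) (Nat.zero_le k) (by omega)
  · rw [add_right_comm, pow_succ']
    exact h i j (by omega) hj (by omega)

theorem IsSmall.norm_succ_le_and_norm_eraseSum_le {k : ℕ} {Q : ℝ} (h : IsSmall z k A Q)
    (hz : ∀ a, ‖z a‖ = 1) (hk : k ≤ #A) {i j : ℕ} (hi : i < k) (hj : j ≤ k) :
    ‖distinctSum z (star z) (i + 1) j A‖ ≤ Q * Q ^ (i + j) ∧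
      ∀ m, 1 ≤ m → m + i ≤ k → ‖eraseSum (z ^ m) (distinctSum z (star z) i j) A‖ ≤
        5 / 2 * (Q * Q ^ (i + j)) := by
  induction hs : i + j using Nat.strong_induction_on generalizing i j with | _ s ih
  subst hs
  have hQ : 0 ≤ Q := (by positivity : (0 : ℝ) ≤ 80 * k).trans h.le_bound
  have hleft (hi0 : 0 < i) (m : ℕ) (hm : 1 ≤ m) (hmi : m + i ≤ k + 1) :
      ‖eraseSum (z ^ m) (distinctSum z (star z) (i - 1) j) A‖ ≤ 5 / 2 * Q ^ (i + j) := by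
    obtain ⟨i, rfl⟩ := Nat.exists_eq_add_one.mpr hi0
    rw [add_right_comm, pow_succ', Nat.add_sub_cancel]
    exact (ih (i + j) (by omega) (by omega) hj rfl).2 m hm (by omega)
  have hright (hj0 : 0 < j) (m : ℕ) (hm : 1 ≤ m) (hmi : m + i ≤ k) :
      ‖eraseSum (z ^ m) (distinctSum z (star z) i (j - 1)) A‖ ≤ 5 / 2 * Q ^ (i + j) := by
    obtain ⟨j, rfl⟩ := Nat.exists_eq_add_one.mpr hj0
    rw [← add_assoc, pow_succ', Nat.add_sub_cancel]
    exact (ih (i + j) (by omega) hi (by omega) rfl).2 m hm hmi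
  have hself {l m : ℕ} (hl : l ≤ k) (hm : m ≤ k) (hlm : l + m ≤ i + j) :
      ‖distinctSum z (star z) l m A‖ ≤ Q ^ (l + m) :=
    norm_distinctSum_le_pow_of_succ_le (fun _ _ hu hv huv => (ih _ huv hu hv rfl).1) hl hm hlm
  have hprev (hj0 : 0 < j) : Q * ‖distinctSum z (star z) i (j - 1) A‖ ≤ Q ^ (i + j) := by
    obtain ⟨j, rfl⟩ := Nat.exists_eq_add_one.mpr hj0
    rw [← add_assoc, pow_succ', Nat.add_sub_cancel]
    gcongr
    exact hself hi.le (by omega) (by omega)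
  obtain ⟨hstep, hweight⟩ := norm_sub_le_of_prev_le (ε := 1 / 32) (δ := 1 / 10) hz hk hi hj
    (by norm_num) (by norm_num) hQ (by positivity) (by linarith [h.le_bound])
    (by linarith [h.card_le]) hleft hright hprev
  have hQX : 0 ≤ Q * Q ^ (i + j) := by positivity
  have hmul {m : ℕ} {c : ℝ} (hc : ‖powSum z m A‖ ≤ c * Q) :
      ‖powSum z m A * distinctSum z (star z) i j A‖ ≤ c * (Q * Q ^ (i + j)) := by
    rw [norm_mul, ← mul_assoc]
    exact mul_le_mul hc (hself hi.le hj le_rfl) (norm_nonneg _) ((norm_nonneg _).trans hc)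
  have hstep' : ‖distinctSum z (star z) (i + 1) j A‖ ≤ Q * Q ^ (i + j) := by
    linarith [norm_le_norm_add_norm_sub' (distinctSum z (star z) (i + 1) j A)
      (powSum z 1 A * distinctSum z (star z) i j A), hmul h.norm_one_le]
  refine ⟨hstep', fun m hm hmi => ?_⟩
  obtain rfl | hm2 := hm.eq_or_lt
  · rw [pow_one, ← distinctSum_succ_left]
    linarith
  · linarith [norm_le_norm_add_norm_sub' (eraseSum (z ^ m) (distinctSum z (star z) i j) A)
      (powSum z m A * distinctSum z (star z) i j A), hweight m hm2 hmi,
      hmul (h.norm_le m (mem_Icc.mpr ⟨hm2, by omega⟩))]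

theorem IsSmall.norm_distinctSum_le {k : ℕ} {Q : ℝ} (h : IsSmall z k A Q) (hz : ∀ a, ‖z a‖ = 1)
    (hk : k ≤ #A) (hk0 : 0 < k) : ‖distinctSum z (star z) k k A‖ ≤ Q ^ (2 * k) := by
  obtain ⟨l, rfl⟩ := Nat.exists_eq_add_one.mpr hk0
  exact (h.norm_succ_le_and_norm_eraseSum_le hz hk l.lt_succ_self le_rfl).1.trans_eq (by ring)

theorem le_re_distinctSum {k : ℕ} (hz : ∀ a, ‖z a‖ = 1) (hk : 2 ≤ k) (hkA : 640 * k ≤ #A) :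
    (9 / 16) ^ k * ‖powSum z 1 A‖ ^ (2 * k) - (1 + (9 / 16) ^ k) * ((10 * k * #A : ℝ) ^ k +
      (25 / 144) ^ k * ∑ m ∈ Icc 2 k, ‖powSum z m A‖ ^ (2 * k)) ≤
        (distinctSum z (star z) k k A).re := by
  by_cases hlarge : IsLarge z k A
  · exact (sub_le_self _ (by positivity)).trans
      (hlarge.le_re_distinctSum hz (by omega) le_rfl)
  · obtain ⟨Q, hsmall, hQ⟩ := exists_isSmall hk hkA hlarge
    have hpow : ‖powSum z 1 A‖ ^ (2 * k) ≤ Q ^ (2 * k) := by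
      have hQ0 : 0 ≤ Q := (by positivity : (0 : ℝ) ≤ 80 * k).trans hsmall.le_bound
      gcongr
      linarith [hsmall.norm_one_le]
    calc _ ≤ (9 / 16) ^ k * Q ^ (2 * k) - (1 + (9 / 16) ^ k) * Q ^ (2 * k) :=
        sub_le_sub (by gcongr) (by gcongr)
      _ = -Q ^ (2 * k) := by ring
      _ ≤ -‖distinctSum z (star z) k k A‖ :=
        neg_le_neg (hsmall.norm_distinctSum_le hz (by omega) (by omega))
      _ ≤ _ := neg_le_of_abs_le (Complex.abs_re_le_norm _)

end Unimodular

section Circle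

open AddCircle MeasureTheory

theorem integrable_haarAddCircle {E : Type*} [NormedAddCommGroup E] {f : UnitAddCircle → E}
    (hf : Continuous f) : Integrable f haarAddCircle :=
  hf.integrable_of_hasCompactSupport (.of_compactSpace f)

/-- The mean over the circle, as a linear functional on continuous functions. -/
noncomputable def circleMean : C(UnitAddCircle, ℂ) →ₗ[ℂ] ℂ where
  toFun f := ∫ t, f t ∂haarAddCircle
  map_add' f g := integral_add (integrable_haarAddCircle f.continuous)
    (integrable_haarAddCircle g.continuous)
  map_smul' c f := integral_const_mul c f

theorem circleMean_apply (f : C(UnitAddCircle, ℂ)) :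
    circleMean f = ∫ t, f t ∂haarAddCircle := rfl

theorem circleMean_fourier (n : ℤ) : circleMean (fourier n) = if n = 0 then 1 else 0 := by
  have h : fourierCoeff (T := 1) (fourier n) 0 = circleMean (fourier n) := by
    simp [fourierCoeff, circleMean_apply]
  rw [← h, fourierCoeff_fourier, Pi.single_apply]
  simp only [eq_comm]

theorem star_fourier (n : ℤ) : star (fourier n : C(UnitAddCircle, ℂ)) = fourier (-n) := by
  ext t
  exact fourier_neg.symm

theorem fourier_mul_fourier (m n : ℤ) :
    (fourier m * fourier n : C(UnitAddCircle, ℂ)) = fourier (m + n) := by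
  ext t
  exact fourier_add.symm

theorem prod_fourier {κ : Type*} (s : Finset κ) (f : κ → ℤ) :
    ∏ i ∈ s, (fourier (f i) : C(UnitAddCircle, ℂ)) = fourier (∑ i ∈ s, f i) := by
  classical
  induction s using Finset.induction_on with
  | empty => ext t; simp
  | insert i s hi ih => rw [prod_insert hi, ih, fourier_mul_fourier, sum_insert hi]

theorem fourier_pow (a : ℤ) (m : ℕ) :
    (fourier a ^ m : C(UnitAddCircle, ℂ)) = fourier (m * a) := by
  rw [← card_range m, ← prod_const, prod_fourier, sum_const, nsmul_eq_mul]

theorem powSum_fourier_pow (m k : ℕ) (A : Finset ℤ) :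
    (powSum fourier m A ^ k : C(UnitAddCircle, ℂ)) =
      ∑ x ∈ Fintype.piFinset fun _ : Fin k => A, fourier (m * ∑ i, x i) := by
  simp only [powSum, sum_pow', fourier_pow, prod_fourier, mul_sum]

theorem circleMean_powSum_pow {m : ℕ} (hm : m ≠ 0) (k : ℕ) (A : Finset ℤ) :
    circleMean (powSum fourier m A ^ k * star (powSum fourier m A ^ k)) = Mcount k A := by
  have hfreq (x y : Fin k → ℤ) : m * ∑ i, x i + -(m * ∑ i, y i) = 0 ↔ ∑ i, x i = ∑ i, y i := by
    rw [add_neg_eq_zero, mul_right_inj' (mod_cast hm)]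
  simp only [powSum_fourier_pow, star_sum, star_fourier, sum_mul_sum, fourier_mul_fourier, map_sum,
    circleMean_fourier, hfreq]
  rw [Mcount, card_filter, sum_product]
  push_cast
  rfl

theorem powSum_fourier_apply (m : ℕ) (A : Finset ℤ) (t : UnitAddCircle) :
    powSum fourier m A t = powSum (fun a => fourier a t) m A := by
  simp only [powSum, ContinuousMap.sum_apply, ContinuousMap.pow_apply]

theorem integral_norm_powSum_pow {m : ℕ} (hm : m ≠ 0) (k : ℕ) (A : Finset ℤ) :
    ∫ t : UnitAddCircle, ‖powSum (fun a => fourier a t) m A‖ ^ (2 * k) ∂haarAddCircle =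
      Mcount k A := by
  have hnorm (t : UnitAddCircle) :
      (powSum fourier m A ^ k * star (powSum fourier m A ^ k) : C(UnitAddCircle, ℂ)) t =
        ((‖powSum (fun a => fourier a t) m A‖ ^ (2 * k) : ℝ) : ℂ) := by
    rw [ContinuousMap.mul_apply, ContinuousMap.star_apply, ContinuousMap.pow_apply,
      powSum_fourier_apply, ← starRingEnd_apply, Complex.mul_conj', norm_pow,
      ← Complex.ofReal_pow, ← pow_mul, mul_comm k]
  have hmean := circleMean_powSum_pow hm k A
  simp only [circleMean_apply, hnorm] at hmean
  rw [integral_complex_ofReal] at hmean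
  exact_mod_cast hmean

theorem IsWeakBkSet.sum_ne_sum {k : ℕ} {A I J : Finset ℤ} (h : IsWeakBkSet k A) (hI : I ⊆ A)
    (hJ : J ⊆ A) (hIJ : Disjoint I J) (hi : #I = k) (hj : #J = k) :
    ∑ a ∈ I, a ≠ ∑ b ∈ J, b := by
  have hsum {K : Finset ℤ} (hK : #K = k) : ∑ l, K.orderEmbOfFin hK l = ∑ a ∈ K, a := by
    rw [← sum_coe_sort K, ← (K.orderIsoOfFin hK).toEquiv.sum_comp]
    rfl
  intro heq
  obtain ⟨l, m, hlm⟩ := h (I.orderEmbOfFin hi) (J.orderEmbOfFin hj)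
    (fun l => hI (I.orderEmbOfFin_mem hi l)) (fun m => hJ (J.orderEmbOfFin_mem hj m))
    (by rw [hsum, hsum, heq]) (I.orderEmbOfFin hi).injective (J.orderEmbOfFin hj).injective
  exact disjoint_left.mp hIJ (I.orderEmbOfFin_mem hi l) (hlm ▸ J.orderEmbOfFin_mem hj m)

theorem IsWeakBkSet.circleMean_distinctSum {k : ℕ} {A : Finset ℤ} (h : IsWeakBkSet k A) :
    circleMean (distinctSum fourier (star fourier) k k A) = 0 := by
  refine distinctSum_mem (S := AddMonoidHom.mker circleMean.toAddMonoidHom)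
    fun I hI J hJ hIJ hi hj => ?_
  have hfreq : ∑ a ∈ I, a + ∑ b ∈ J, -b ≠ 0 := by
    rw [sum_neg_distrib, add_neg_eq_zero.ne]
    exact h.sum_ne_sum hI hJ hIJ hi hj
  simp only [Pi.star_apply, star_fourier]
  rw [prod_fourier J, prod_fourier I fun a => a, fourier_mul_fourier]
  exact (circleMean_fourier _).trans (if_neg hfreq)

theorem distinctSum_fourier_apply (i j : ℕ) (A : Finset ℤ) (t : UnitAddCircle) :
    distinctSum fourier (star fourier) i j A t =
      distinctSum (fun a => fourier a t) (star fun a => fourier a t) i j A :=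
  congr_fun (map_distinctSum (ContinuousMap.evalAlgHom ℂ ℂ t).toRingHom fourier (star fourier) i j)
    A

theorem IsWeakBkSet.integral_re_distinctSum {k : ℕ} {A : Finset ℤ} (h : IsWeakBkSet k A) :
    ∫ t : UnitAddCircle, (distinctSum (fun a => fourier a t) (star fun a => fourier a t) k k A).re
      ∂haarAddCircle = 0 := by
  simp only [← distinctSum_fourier_apply]
  rw [← RCLike.re_eq_complex_re, integral_re (integrable_haarAddCircle (map_continuous _)),
    ← circleMean_apply, h.circleMean_distinctSum, map_zero]

theorem IsWeakBkSet.mul_mcount_le {k : ℕ} {A : Finset ℤ} (h : IsWeakBkSet k A) (hk : 2 ≤ k)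
    (hkA : 640 * k ≤ #A) :
    (9 / 16) ^ k * Mcount k A ≤ (1 + (9 / 16) ^ k) *
      ((10 * k * #A : ℝ) ^ k + (25 / 144) ^ k * ((k - 1) * Mcount k A)) := by
  have hcont (m : ℕ) : Continuous
      fun t : UnitAddCircle => ‖powSum (fun a => fourier a t) m A‖ ^ (2 * k) := by
    unfold powSum
    fun_prop
  have hre : Continuous fun t : UnitAddCircle =>
      (distinctSum (fun a => fourier a t) (star fun a => fourier a t) k k A).re := by
    simp only [← distinctSum_fourier_apply]
    fun_prop
  have hsum : ∫ t : UnitAddCircle, ∑ m ∈ Icc 2 k, ‖powSum (fun a => fourier a t) m A‖ ^ (2 * k)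
      ∂haarAddCircle = (k - 1) * Mcount k A := by
    rw [integral_finsetSum _ fun m _ => integrable_haarAddCircle (hcont m),
      sum_congr rfl fun m hm =>
        integral_norm_powSum_pow (two_pos.trans_le (mem_Icc.mp hm).1).ne' k A,
      sum_const, Nat.card_Icc, nsmul_eq_mul, Nat.cast_sub (by omega)]
    push_cast
    ring
  have hmono := integral_mono (integrable_haarAddCircle (by fun_prop))
    (integrable_haarAddCircle hre)
    fun t => le_re_distinctSum (z := fun a => fourier a t) (fun a => Circle.norm_coe _) hk hkA
  rw [h.integral_re_distinctSum, integral_sub (integrable_haarAddCircle (by fun_prop))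
    (integrable_haarAddCircle (by fun_prop)), integral_const_mul, integral_const_mul,
    integral_add (integrable_haarAddCircle (by fun_prop)) (integrable_haarAddCircle (by fun_prop)),
    integral_const, integral_const_mul, probReal_univ, one_smul, hsum,
    integral_norm_powSum_pow one_ne_zero] at hmono
  exact sub_nonpos.mp hmono

end Circle

section Bounds

variable {k : ℕ} {A : Finset ℤ}

theorem sub_one_mul_pow_le (hk : 2 ≤ k) : ((k : ℝ) - 1) * (25 / 81) ^ k ≤ (25 / 81) ^ 2 := by
  obtain ⟨n, rfl⟩ := Nat.exists_eq_add_of_le' hk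
  have hbernoulli : 1 + (n : ℝ) ≤ (81 / 25) ^ n := by
    calc 1 + (n : ℝ) ≤ 1 + n * (56 / 25) := by linarith [n.cast_nonneg (α := ℝ)]
      _ ≤ (1 + 56 / 25) ^ n := one_add_mul_le_pow (by norm_num) n
      _ = (81 / 25) ^ n := by norm_num
  calc (((n + 2 : ℕ) : ℝ) - 1) * (25 / 81) ^ (n + 2)
      = (1 + n) * ((25 / 81) ^ n * (25 / 81) ^ 2) := by push_cast; ring
    _ ≤ (81 / 25) ^ n * ((25 / 81) ^ n * (25 / 81) ^ 2) := by gcongr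
    _ = (25 / 81) ^ 2 := by rw [← mul_assoc, ← mul_pow]; norm_num

theorem IsWeakBkSet.mcount_le (h : IsWeakBkSet k A) (hk : 2 ≤ k) (hkA : 640 * k ≤ #A) :
    (Mcount k A : ℝ) ≤ 3 / 2 * (18 * k * #A) ^ k := by
  have hpow {c d : ℝ} (hcd : 9 / 16 * d = c) : c ^ k = (9 / 16) ^ k * d ^ k := by
    rw [← mul_pow, hcd]
  have hten : (10 * k * #A : ℝ) ^ k = (9 / 16) ^ k * ((80 / 81) ^ k * (18 * k * #A) ^ k) := by
    rw [← mul_pow (80 / 81)]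
    exact hpow (by ring)
  have hmean := h.mul_mcount_le hk hkA
  rw [hten, hpow (c := 25 / 144) (d := 25 / 81) (by norm_num), mul_assoc ((9 / 16) ^ k), ← mul_add,
    mul_left_comm, mul_le_mul_iff_right₀ (by positivity), ← mul_assoc, mul_comm ((25 / 81) ^ k)]
    at hmean
  have hle {c : ℝ} (hc0 : 0 ≤ c) (hc1 : c ≤ 1) : c ^ k ≤ c ^ 2 := pow_le_pow_of_le_one hc0 hc1 hk
  have hbound : (Mcount k A : ℝ) ≤
      (1 + (9 / 16) ^ 2) * ((80 / 81) ^ 2 * (18 * k * #A) ^ k + (25 / 81) ^ 2 * Mcount k A) := by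
    have hx : (9 / 16 : ℝ) ^ k ≤ (9 / 16) ^ 2 := hle (by norm_num) (by norm_num)
    have hy : (80 / 81 : ℝ) ^ k ≤ (80 / 81) ^ 2 := hle (by norm_num) (by norm_num)
    have hpos : 0 ≤ (k - 1 : ℝ) := sub_nonneg.mpr (mod_cast one_le_two.trans hk)
    refine hmean.trans (mul_le_mul (add_le_add_right hx 1) ?_ (by positivity) (by positivity))
    gcongr ?_ * _ + ?_ * _
    exact sub_one_mul_pow_le hk
  linarith [show (0 : ℝ) ≤ (18 * k * #A) ^ k by positivity]

theorem mul_pow_le_pow_add_two (hk : 2 ≤ k) : 9 / 16 * (81 / 16 : ℝ) ^ k ≤ k ^ (k + 2) := by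
  obtain hk6 | hk6 := lt_or_ge k 6
  · interval_cases k <;> norm_num
  · have hk6' : (6 : ℝ) ≤ k := mod_cast hk6
    rw [pow_add, mul_comm]
    gcongr
    · linarith
    · nlinarith

theorem mul_eighteen_mul_pow_le (hk : 2 ≤ k) :
    3 / 2 * (18 * k : ℝ) ^ k ≤ 2 * k * 8 ^ k * (k : ℝ) ^ (3 * (k : ℝ) / 2) := by
  have hrpow : ((k : ℝ) ^ (3 * (k : ℝ) / 2)) ^ 2 = k ^ (3 * k) := by
    rw [← Real.rpow_natCast, ← Real.rpow_mul k.cast_nonneg, ← Real.rpow_natCast]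
    push_cast
    ring_nf
  refine le_of_sq_le_sq ?_ (by positivity)
  calc (3 / 2 * (18 * k : ℝ) ^ k) ^ 2
      = 4 * 64 ^ k * k ^ (2 * k) * (9 / 16 * (81 / 16) ^ k) := by
        have hbase : (324 : ℝ) ^ k = 64 ^ k * (81 / 16) ^ k := by rw [← mul_pow]; norm_num
        rw [mul_pow, ← pow_mul, mul_comm k 2, pow_mul, mul_pow, mul_pow, ← pow_mul (k : ℝ)]
        norm_num [hbase]
        ring
    _ ≤ 4 * 64 ^ k * k ^ (2 * k) * k ^ (k + 2) := by
        gcongr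
        exact mul_pow_le_pow_add_two hk
    _ = (2 * k * 8 ^ k * (k : ℝ) ^ (3 * (k : ℝ) / 2)) ^ 2 := by
        have hbase : ((8 : ℝ) ^ k) ^ 2 = 64 ^ k := by rw [pow_right_comm]; norm_num
        rw [mul_pow, mul_pow, hrpow, hbase]
        ring

theorem mcount_one_le (A : Finset ℤ) : Mcount 1 A ≤ #A := by
  classical
  rw [Mcount]
  refine (card_le_card fun p hp => ?_).trans
    (card_image_le (s := A) (f := fun a => (fun _ => a, fun _ => a)))
  rw [mem_filter, mem_product, Fintype.mem_piFinset, Fin.sum_univ_one, Fin.sum_univ_one] at hp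
  obtain ⟨⟨hx, -⟩, hxy⟩ := hp
  refine mem_image.mpr ⟨p.1 0, hx 0, Prod.ext (funext fun i => ?_) (funext fun i => ?_)⟩
  · rw [Subsingleton.elim i 0]
  · rw [Subsingleton.elim i 0, hxy]

theorem mul_sub_one_le_mul_pow_six (hk : 1 ≤ k) : 1280 * (k - 1) ≤ 20 * k ^ 6 := by
  obtain ⟨n, rfl⟩ := Nat.exists_eq_add_of_le' hk
  obtain rfl | hn := n.eq_zero_or_pos
  · norm_num
  calc 1280 * (n + 1 - 1) = 20 * (16 * (4 * n)) := by rw [Nat.add_sub_cancel]; ring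
    _ ≤ 20 * ((n + 1) ^ 4 * (n + 1) ^ 2) := by
      gcongr
      · exact Nat.pow_le_pow_left (show 2 ≤ n + 1 by omega) 4
      · nlinarith
    _ = 20 * (n + 1) ^ 6 := by ring

end Bounds

theorem Mk_main_bound_general (k : ℕ) (hk : 1 ≤ k) (A : Finset ℤ)
    (hA : 1280 * (k - 1) ≤ A.card) (hweak : IsWeakBkSet k A) :
    (Mcount k A : ℝ) ≤ 2 * k * 8 ^ k * (k : ℝ) ^ ((3 * (k : ℝ)) / 2) * (A.card : ℝ) ^ k := by
  obtain rfl | hk2 := hk.eq_or_lt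
  · have hM : (Mcount 1 A : ℝ) ≤ #A := mod_cast mcount_one_le A
    simp only [Nat.cast_one, mul_one, pow_one, Real.one_rpow]
    linarith
  · calc (Mcount k A : ℝ) ≤ 3 / 2 * (18 * k * #A) ^ k := hweak.mcount_le hk2 (by omega)
      _ = 3 / 2 * (18 * k) ^ k * #A ^ k := by rw [mul_pow _ (#A : ℝ), mul_assoc]
      _ ≤ _ := by
        gcongr ?_ * _
        exact mul_eighteen_mul_pow_le hk2

theorem Mk_main_bound (k : ℕ) (hk : 1 ≤ k) (A : Finset ℤ)
    (hA : 20 * k ^ 6 ≤ A.card) (hweak : IsWeakBkSet k A) :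
    (Mcount k A : ℝ) ≤ 2 * k * 8 ^ k * (k : ℝ) ^ ((3 * (k : ℝ)) / 2) * (A.card : ℝ) ^ k :=
  Mk_main_bound_general k hk A ((mul_sub_one_le_mul_pow_six hk).trans hA) hweak
end
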